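/- arXiv:1910.04259 — 2 statements merged into one kernel-verified Lean document; each statement's English description precedes it below -/
import Mathlib

section
/- Let ℰ = {ε_p(i), i ∈ [p], p ∈ ℕ} be a Gaussian triangular array with standard Normal marginals which is UDD with function N_ℰ(τ). Let τ(p) → 0 be chosen so that α(p) := log N_ℰ(τ(p))/log p → 0 as p → ∞. Then for every positive sequence δ_p with (α(p) + τ(p) + 1/log p)/δ_p → 0, one has P(|max_{i∈[p]} ε_p(i)/u_p − 1| > δ_p) → 0 as p → ∞, where u_p = Φ^{←}(1 − 1/p) is the (1 − 1/p)-quantile of the standard Normal distribution. -/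
open MeasureTheory ProbabilityTheory Filter Topology

/-- The standard Normal cumulative distribution function `Φ`. -/
noncomputable def stdGaussianCDF (u : ℝ) : ℝ :=
  ∫ x in Set.Iic u, Real.exp (-x ^ 2 / 2) / Real.sqrt (2 * Real.pi)

/-- The generalized inverse (quantile function) `Φ^{←}` of the standard Normal cdf. -/
noncomputable def stdGaussianQuantile (y : ℝ) : ℝ :=
  sInf {x : ℝ | y ≤ stdGaussianCDF x}

/-- A finite family of random variables is jointly Gaussian if every linear
combination is Gaussian. -/
def IsJointGaussian {Ω : Type*} [MeasureSpace Ω] {ι : Type*} [Fintype ι]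
    (X : ι → Ω → ℝ) : Prop :=
  ∀ c : ι → ℝ, ∃ m : ℝ, ∃ v : NNReal,
    MeasureTheory.Measure.map (fun ω => ∑ i, c i * X i ω) ℙ =
      ProbabilityTheory.gaussianReal m v

/-- The covariance of two real random variables. -/
noncomputable def covar {Ω : Type*} [MeasureSpace Ω] (X Y : Ω → ℝ) : ℝ :=
  (∫ ω, X ω * Y ω ∂ℙ) - (∫ ω, X ω ∂ℙ) * (∫ ω, Y ω ∂ℙ)

/-!
Write `Q` for the standard Gaussian tail and `u` for the quantile with `Q u = 1 / p`. Comparing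
shifted densities gives `Q (u + h) ≤ exp (-u h - h² / 2) Q u` for `0 ≤ h`, so by the union bound the
maximum exceeds `(1 + δ) u` with probability at most `exp (-δ u²)`.

For the lower tail, an inclusion-maximal set of indices whose pairwise covariances are at most `τ`
has at least `p / N` elements. By Slepian's inequality its maximum dominates stochastically that of
`√τ Z + √(1 - τ) Zᵢ` with independent standard normal `Z`, `Zᵢ`. Chebyshev's inequality for `√τ Z`
at level `δ u / 4`, together with the tail bound above read backwards from `u` to `(1 - δ / 2) u`,
bounds the probability that the maximum is at most `(1 - δ) u` by
`16 τ / (δ u)² + exp (-exp (δ u² / 4 - log N))` when `δ < 2`. Since `u²` is at least of order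
`log p`, the rate condition makes `δ u²` diverge and dominate `log N`.

Slepian's inequality is reduced to a one-dimensional one: for a standard normal `g`, the vector
`x + g (eᵢ + eⱼ)` is more likely to stay below `a` than `x + g (eᵢ - eⱼ)`. Replacing the second kind
of increment by the first raises a covariance and keeps the variances, and adding a small multiple
of the identity leaves room for such replacements along the segment between the two covariance
matrices.
-/

section GaussianMeasure

open Matrix WithLp

/-- The closed lower orthant `∏ᵢ (-∞, aᵢ]` with corner `a`, as a subset of Euclidean space. -/
def lowerOrthant {ι : Type*} (a : ι → ℝ) : Set (EuclideanSpace ℝ ι) := {x | ∀ i, x i ≤ a i}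

lemma isClosed_lowerOrthant {ι : Type*} (a : ι → ℝ) : IsClosed (lowerOrthant a) := by
  simp only [lowerOrthant, Set.ofPred_forall]
  exact isClosed_iInter fun i ↦ isClosed_le (by fun_prop) continuous_const

lemma measurableSet_lowerOrthant {ι : Type*} [Countable ι] (a : ι → ℝ) :
    MeasurableSet (lowerOrthant a) := by
  simp only [lowerOrthant, Set.ofPred_forall]
  exact MeasurableSet.iInter fun i ↦ measurableSet_le (by fun_prop) measurable_const

lemma tendsto_measure_lowerOrthant_add_one_div {ι : Type*} [Countable ι]
    (μ : Measure (EuclideanSpace ℝ ι)) [IsFiniteMeasure μ] (a : ι → ℝ) :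
    Tendsto (fun n : ℕ ↦ μ (lowerOrthant fun i ↦ a i + 1 / ((n : ℝ) + 1))) atTop
      (𝓝 (μ (lowerOrthant a))) := by
  have iInter_eq : ⋂ n : ℕ, lowerOrthant (fun i ↦ a i + 1 / ((n : ℝ) + 1)) = lowerOrthant a := by
    ext x
    simp only [lowerOrthant, Set.mem_iInter, Set.mem_ofPred_eq]
    refine ⟨fun h i ↦ ge_of_tendsto' (x := atTop) ?_ fun n ↦ h n i,
      fun h n i ↦ (h i).trans (le_add_of_nonneg_right (by positivity))⟩
    simpa using (tendsto_one_div_add_atTop_nhds_zero_nat (𝕜 := ℝ)).const_add (a i)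
  have antitone : Antitone fun n : ℕ ↦ lowerOrthant (fun i ↦ a i + 1 / ((n : ℝ) + 1)) :=
    fun n k hnk x hx i ↦ (hx i).trans (add_le_add_right (Nat.one_div_le_one_div hnk) _)
  rw [← iInter_eq]
  exact tendsto_measure_iInter_atTop
    (fun n ↦ (measurableSet_lowerOrthant _).nullMeasurableSet) antitone ⟨0, measure_ne_top _ _⟩

lemma posSemidef_vecMulVec_self {ι : Type*} [Finite ι] (v : ι → ℝ) :
    (vecMulVec v v).PosSemidef := by
  simpa using posSemidef_vecMulVec_self_star v

variable {ι : Type*} [Fintype ι] [DecidableEq ι] {A B S T : Matrix ι ι ℝ}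

lemma multivariateGaussian_conv_multivariateGaussian (m m' : EuclideanSpace ℝ ι)
    (hA : A.PosSemidef) (hB : B.PosSemidef) :
    multivariateGaussian m A ∗ multivariateGaussian m' B =
      multivariateGaussian (m + m') (A + B) := by
  apply Measure.ext_of_charFun
  ext t
  rw [charFun_conv, charFun_multivariateGaussian hA, charFun_multivariateGaussian hB,
    charFun_multivariateGaussian (hA.add hB), ← Complex.exp_add, add_mulVec, dotProduct_add,
    inner_add_right]
  congr 1
  push_cast
  ring

lemma multivariateGaussian_map_const_smul (m : EuclideanSpace ℝ ι) (hA : A.PosSemidef) (c : ℝ) :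
    (multivariateGaussian m A).map (fun x ↦ c • x) =
      multivariateGaussian (c • m) (c ^ 2 • A) := by
  apply Measure.ext_of_charFun
  ext t
  rw [charFun_map_smul, charFun_multivariateGaussian hA,
    charFun_multivariateGaussian (hA.smul (sq_nonneg c)), real_inner_smul_left,
    real_inner_smul_right]
  simp only [ofLp_smul, mulVec_smul, smul_mulVec, dotProduct_smul, smul_dotProduct, smul_eq_mul]
  push_cast
  ring_nf

lemma gaussianReal_map_smul_const (v : EuclideanSpace ℝ ι) :
    (gaussianReal 0 1).map (fun g : ℝ ↦ g • v) =
      multivariateGaussian 0 (vecMulVec (ofLp v) (ofLp v)) := by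
  apply Measure.ext_of_charFun
  ext t
  have quadraticForm_eq :
      ofLp t ⬝ᵥ vecMulVec (ofLp v) (ofLp v) *ᵥ ofLp t = inner ℝ v t ^ 2 := by
    rw [vecMulVec_mulVec, EuclideanSpace.inner_eq_star_dotProduct]
    simp [dotProduct_comm, sq]
  calc charFun ((gaussianReal 0 1).map fun g : ℝ ↦ g • v) t
      = charFun (gaussianReal 0 1) (inner ℝ v t) := by
        rw [charFun_apply, integral_map (by fun_prop) (by fun_prop), charFun_apply]
        simp [real_inner_smul_left, mul_comm]
    _ = charFun (multivariateGaussian 0 (vecMulVec (ofLp v) (ofLp v))) t := by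
        rw [charFun_gaussianReal, charFun_multivariateGaussian (posSemidef_vecMulVec_self _),
          quadraticForm_eq]
        simp

lemma multivariateGaussian_add_vecMulVec_apply (m : EuclideanSpace ℝ ι) (hA : A.PosSemidef)
    (v : ι → ℝ) {s : Set (EuclideanSpace ℝ ι)} (hs : MeasurableSet s) :
    multivariateGaussian m (A + vecMulVec v v) s =
      ∫⁻ x, gaussianReal 0 1 {g | x + g • toLp 2 v ∈ s} ∂(multivariateGaussian m A) := by
  rw [← add_zero m, ← multivariateGaussian_conv_multivariateGaussian m 0 hA
    (posSemidef_vecMulVec_self v), add_zero, ← ofLp_toLp 2 v, ← gaussianReal_map_smul_const,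
    Measure.conv, Measure.map_apply (by fun_prop) hs,
    Measure.prod_apply (hs.preimage (by fun_prop))]
  refine lintegral_congr fun x ↦ ?_
  rw [Measure.map_apply (by fun_prop) ((hs.preimage (by fun_prop)).preimage (by fun_prop))]
  rfl

lemma multivariateGaussian_smul_one_lowerOrthant {c : ℝ} (hc : 0 < c) (a : ι → ℝ) :
    multivariateGaussian 0 (c ^ 2 • (1 : Matrix ι ι ℝ)) (lowerOrthant a) =
      ∏ i, gaussianReal 0 1 (Set.Iic (a i / c)) := by
  have preimage_eq : ((fun x : EuclideanSpace ℝ ι ↦ c • x) ∘ toLp 2) ⁻¹' lowerOrthant a =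
      Set.univ.pi fun i ↦ Set.Iic (a i / c) := by
    ext x
    simp [lowerOrthant, Pi.le_def, le_div_iff₀ hc, mul_comm]
  rw [← smul_zero c, ← multivariateGaussian_map_const_smul 0 PosSemidef.one,
    multivariateGaussian_zero_one, ← map_pi_eq_stdGaussian,
    Measure.map_map (by fun_prop) (by fun_prop),
    Measure.map_apply (by fun_prop) (measurableSet_lowerOrthant _), preimage_eq, Measure.pi_pi]

lemma tendsto_multivariateGaussian {m : EuclideanSpace ℝ ι} {Sₙ : ℕ → Matrix ι ι ℝ}
    (hSₙ : ∀ n, (Sₙ n).PosSemidef) (hS : S.PosSemidef) (hlim : Tendsto Sₙ atTop (𝓝 S)) :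
    Tendsto (β := ProbabilityMeasure (EuclideanSpace ℝ ι))
      (fun n ↦ ⟨multivariateGaussian m (Sₙ n), inferInstance⟩) atTop
      (𝓝 ⟨multivariateGaussian m S, inferInstance⟩) := by
  refine ProbabilityMeasure.tendsto_of_tendsto_charFun fun t ↦ ?_
  simp only [ProbabilityMeasure.coe_mk, charFun_multivariateGaussian, hSₙ, hS]
  have continuous_charFun : Continuous fun M : Matrix ι ι ℝ ↦
      Complex.exp (inner ℝ t m * Complex.I - ↑(ofLp t ⬝ᵥ M *ᵥ ofLp t) / 2) := by fun_prop
  exact (continuous_charFun.tendsto S).comp hlim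

end GaussianMeasure

section Slepian

open Matrix WithLp

lemma gaussianReal_zero_preimage_neg (v : NNReal) {s : Set ℝ} (hs : MeasurableSet s) :
    gaussianReal 0 v (Neg.neg ⁻¹' s) = gaussianReal 0 v s := by
  rw [← Measure.map_apply measurable_neg hs]
  simpa using congrArg (· s) (gaussianReal_map_neg (μ := 0) (v := v))

/-- The Laplacian of the graph with edge weights `D`: the matrix of the quadratic form
`x ↦ ∑ᵢⱼ Dᵢⱼ (xᵢ - xⱼ)²`. -/
def weightedLaplacian {ι : Type*} [Fintype ι] [DecidableEq ι] (D : Matrix ι ι ℝ) : Matrix ι ι ℝ :=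
  ∑ e : ι × ι, D e.1 e.2 •
    vecMulVec (Pi.single e.1 1 - Pi.single e.2 1) (Pi.single e.1 1 - Pi.single e.2 1)

/-- The signless Laplacian of the graph with edge weights `D`: the matrix of the quadratic form
`x ↦ ∑ᵢⱼ Dᵢⱼ (xᵢ + xⱼ)²`. -/
def weightedSignlessLaplacian {ι : Type*} [Fintype ι] [DecidableEq ι] (D : Matrix ι ι ℝ) :
    Matrix ι ι ℝ :=
  ∑ e : ι × ι, D e.1 e.2 •
    vecMulVec (Pi.single e.1 1 + Pi.single e.2 1) (Pi.single e.1 1 + Pi.single e.2 1)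

lemma gaussianReal_mem_lowerOrthant_single_sub_le_single_add {ι : Type*} [Finite ι]
    [DecidableEq ι] (a : ι → ℝ) (x : EuclideanSpace ℝ ι) {i j : ι} (hij : i ≠ j) (c : ℝ) :
    gaussianReal 0 1 {g | x + g • toLp 2 (c • (Pi.single i 1 - Pi.single j 1)) ∈ lowerOrthant a} ≤
      gaussianReal 0 1
        {g | x + g • toLp 2 (c • (Pi.single i 1 + Pi.single j 1)) ∈ lowerOrthant a} := by
  cases nonempty_fintype ι
  have measurableSet_line (v : EuclideanSpace ℝ ι) :
      MeasurableSet {g : ℝ | x + g • v ∈ lowerOrthant a} :=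
    (measurableSet_lowerOrthant a).preimage (by fun_prop)
  have mem_line (v : ι → ℝ) (g : ℝ) :
      x + g • toLp 2 (c • v) ∈ lowerOrthant a ↔ ∀ k, g * (c * v k) ≤ a k - x k := by
    simp [lowerOrthant, le_sub_iff_add_le']
  -- If the slack `aᵢ - xᵢ` is the smaller one, the first set is contained in the second one;
  -- otherwise the reflection of the first set is.
  rcases le_total (a i - x i) (a j - x j) with slack | slack
  · refine measure_mono fun g hg ↦ (mem_line _ _).2 fun k ↦ ?_
    have at_k := (mem_line _ _).1 hg k
    have at_i := (mem_line _ _).1 hg i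
    rcases eq_or_ne k i with rfl | hki
    · simpa [hij] using at_i
    rcases eq_or_ne k j with rfl | hkj
    · simpa [hki, hij] using at_i.trans slack
    · simpa [hki, hkj] using at_k
  · rw [← gaussianReal_zero_preimage_neg 1 (measurableSet_line _)]
    refine measure_mono fun g hg ↦ (mem_line _ _).2 fun k ↦ ?_
    have at_k := (mem_line _ _).1 hg k
    have at_j := (mem_line _ _).1 hg j
    rcases eq_or_ne k j with rfl | hkj
    · simpa [hij.symm] using at_j
    rcases eq_or_ne k i with rfl | hki
    · simpa [hkj, hij.symm] using at_j.trans slack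
    · simpa [hki, hkj] using at_k

variable {ι : Type*} [Fintype ι] [DecidableEq ι] {A D S T : Matrix ι ι ℝ}
  (m : EuclideanSpace ℝ ι) (a : ι → ℝ)

lemma multivariateGaussian_lowerOrthant_single_sub_le_single_add (hA : A.PosSemidef) {i j : ι}
    (hij : i ≠ j) {c : ℝ} (hc : 0 ≤ c) :
    multivariateGaussian m
        (A + c • vecMulVec (Pi.single i 1 - Pi.single j 1) (Pi.single i 1 - Pi.single j 1))
        (lowerOrthant a) ≤
      multivariateGaussian m
        (A + c • vecMulVec (Pi.single i 1 + Pi.single j 1) (Pi.single i 1 + Pi.single j 1))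
        (lowerOrthant a) := by
  have smul_vecMulVec_self (v : ι → ℝ) : c • vecMulVec v v = vecMulVec (√c • v) (√c • v) := by
    rw [vecMulVec_smul, smul_vecMulVec, smul_smul, Real.mul_self_sqrt hc]
  simp only [smul_vecMulVec_self,
    multivariateGaussian_add_vecMulVec_apply m hA _ (measurableSet_lowerOrthant a)]
  exact lintegral_mono fun x ↦ gaussianReal_mem_lowerOrthant_single_sub_le_single_add a x hij _

lemma multivariateGaussian_add_sum_apply_mono {α : Type*} {s : Set (EuclideanSpace ℝ ι)}
    {B B' : α → Matrix ι ι ℝ} (hB : ∀ e, (B e).PosSemidef) (hB' : ∀ e, (B' e).PosSemidef)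
    (hle : ∀ e A, A.PosSemidef →
      multivariateGaussian m (A + B e) s ≤ multivariateGaussian m (A + B' e) s)
    (P : Finset α) (hA : A.PosSemidef) :
    multivariateGaussian m (A + ∑ e ∈ P, B e) s ≤
      multivariateGaussian m (A + ∑ e ∈ P, B' e) s := by
  classical
  induction P using Finset.induction_on generalizing A with
  | empty => simp
  | insert e P he ih =>
    rw [Finset.sum_insert he, Finset.sum_insert he]
    calc multivariateGaussian m (A + (B e + ∑ f ∈ P, B f)) s
        = multivariateGaussian m (A + B e + ∑ f ∈ P, B f) s := by rw [add_assoc]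
      _ ≤ multivariateGaussian m (A + B e + ∑ f ∈ P, B' f) s := ih (hA.add (hB e))
      _ = multivariateGaussian m (A + ∑ f ∈ P, B' f + B e) s := by rw [add_right_comm]
      _ ≤ multivariateGaussian m (A + ∑ f ∈ P, B' f + B' e) s :=
        hle e _ (hA.add (posSemidef_sum _ fun f _ ↦ hB' f))
      _ = multivariateGaussian m (A + (B' e + ∑ f ∈ P, B' f)) s := by
        rw [add_assoc, add_comm (B' e)]

lemma multivariateGaussian_add_weightedLaplacian_lowerOrthant_le (hA : A.PosSemidef)
    (hD : ∀ i j, 0 ≤ D i j) (hdiag : ∀ i, D i i = 0) :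
    multivariateGaussian m (A + weightedLaplacian D) (lowerOrthant a) ≤
      multivariateGaussian m (A + weightedSignlessLaplacian D) (lowerOrthant a) := by
  refine multivariateGaussian_add_sum_apply_mono m
    (fun e ↦ (posSemidef_vecMulVec_self _).smul (hD _ _))
    (fun e ↦ (posSemidef_vecMulVec_self _).smul (hD _ _)) ?_ Finset.univ hA
  rintro ⟨i, j⟩ A hA
  rcases eq_or_ne i j with rfl | hij
  · simp [hdiag]
  · exact multivariateGaussian_lowerOrthant_single_sub_le_single_add m a hA hij (hD i j)

lemma weightedSignlessLaplacian_eq (D : Matrix ι ι ℝ) :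
    weightedSignlessLaplacian D = weightedLaplacian D + (2 : ℝ) • (D + Dᵀ) := by
  have single_eq (i j : ι) :
      single i j (D i j) = D i j • vecMulVec (Pi.single i 1) (Pi.single j 1) := by
    rw [← single_eq_single_vecMulVec_single, smul_single, smul_eq_mul, mul_one]
  have edge (i j : ι) :
      D i j • vecMulVec (Pi.single i 1 + Pi.single j 1) (Pi.single i 1 + Pi.single j 1) =
        D i j • vecMulVec (Pi.single i 1 - Pi.single j 1) (Pi.single i 1 - Pi.single j 1) +
          (2 : ℝ) • (single i j (D i j) + (single i j (D i j))ᵀ) := by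
    simp only [single_eq, transpose_smul, transpose_vecMulVec, add_vecMulVec, vecMulVec_add,
      sub_vecMulVec, vecMulVec_sub]
    module
  simp only [weightedSignlessLaplacian, weightedLaplacian, edge, Finset.sum_add_distrib,
    ← Finset.smul_sum, ← transpose_sum, Fintype.sum_prod_type, ← matrix_eq_sum_single D]

lemma posSemidef_dotProduct_smul_one_sub_vecMulVec (v : ι → ℝ) :
    ((v ⬝ᵥ v) • (1 : Matrix ι ι ℝ) - vecMulVec v v).PosSemidef := by
  refine PosSemidef.of_dotProduct_mulVec_nonneg
    ((PosSemidef.one.isHermitian.smul (.all _)).sub (posSemidef_vecMulVec_self v).isHermitian)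
    fun x ↦ ?_
  have cauchySchwarz : (v ⬝ᵥ x) ^ 2 ≤ (v ⬝ᵥ v) * (x ⬝ᵥ x) := by
    simpa only [dotProduct, sq] using Finset.sum_mul_sq_le_sq_mul_sq Finset.univ v x
  simpa [sub_mulVec, vecMulVec_mulVec, smul_mulVec, dotProduct_comm x v, ← sq] using cauchySchwarz

lemma exists_posSemidef_smul_one_sub_weightedLaplacian (hD : ∀ i j, 0 ≤ D i j) :
    ∃ C : ℝ, 0 ≤ C ∧ (C • (1 : Matrix ι ι ℝ) - weightedLaplacian D).PosSemidef := by
  let v (e : ι × ι) : ι → ℝ := Pi.single e.1 1 - Pi.single e.2 1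
  refine ⟨∑ e : ι × ι, D e.1 e.2 * (v e ⬝ᵥ v e), Finset.sum_nonneg fun e _ ↦
    mul_nonneg (hD _ _) (Finset.sum_nonneg fun k _ ↦ mul_self_nonneg _), ?_⟩
  simp only [weightedLaplacian, Finset.sum_smul, ← Finset.sum_sub_distrib, mul_smul, ← smul_sub]
  exact posSemidef_sum _ fun e _ ↦
    (posSemidef_dotProduct_smul_one_sub_vecMulVec (v e)).smul (hD _ _)

lemma exists_forall_le_posSemidef_smul_one_sub_smul_weightedLaplacian (hD : ∀ i j, 0 ≤ D i j)
    {s : ℝ} (hs : 0 < s) :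
    ∃ r > (0 : ℝ), ∀ h : ℝ, 0 ≤ h → h ≤ r →
      (s • (1 : Matrix ι ι ℝ) - h • weightedLaplacian D).PosSemidef := by
  obtain ⟨C, hC, psd⟩ := exists_posSemidef_smul_one_sub_weightedLaplacian hD
  refine ⟨s / (C + 1), by positivity, fun h h_nonneg hr ↦ ?_⟩
  have hCs : h * C ≤ s := by
    rw [le_div_iff₀ (by positivity)] at hr
    linarith
  have split : s • (1 : Matrix ι ι ℝ) - h • weightedLaplacian D =
      (s - h * C) • (1 : Matrix ι ι ℝ) + h • (C • (1 : Matrix ι ι ℝ) - weightedLaplacian D) := by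
    module
  rw [split]
  exact (PosSemidef.one.smul (by linarith)).add (psd.smul h_nonneg)

lemma weightedLaplacian_smul (c : ℝ) (D : Matrix ι ι ℝ) :
    weightedLaplacian (c • D) = c • weightedLaplacian D := by
  simp only [weightedLaplacian, Finset.smul_sum, Matrix.smul_apply, smul_assoc]

lemma multivariateGaussian_lowerOrthant_le_add_symm
    (hA : (A - weightedLaplacian D).PosSemidef) (hD : ∀ i j, 0 ≤ D i j)
    (hdiag : ∀ i, D i i = 0) :
    multivariateGaussian m A (lowerOrthant a) ≤
      multivariateGaussian m (A + (2 : ℝ) • (D + Dᵀ)) (lowerOrthant a) := by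
  have step := multivariateGaussian_add_weightedLaplacian_lowerOrthant_le m a hA hD hdiag
  rwa [weightedSignlessLaplacian_eq, ← add_assoc, sub_add_cancel] at step

lemma le_of_forall_short_step {α : Type*} [Preorder α] {f : ℝ → α} {r : ℝ} (hr : 0 < r)
    (step : ∀ x ∈ Set.Icc (0 : ℝ) 1, ∀ h ∈ Set.Icc 0 r, f x ≤ f (x + h)) : f 0 ≤ f 1 := by
  obtain ⟨n, hn⟩ := exists_nat_one_div_lt hr
  have hn_pos : (0 : ℝ) < n + 1 := by positivity
  have chain (k : ℕ) (hk : k ≤ n + 1) : f 0 ≤ f (k / (n + 1)) := by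
    induction k with
    | zero => simp
    | succ k ih =>
      have hk' : (k : ℝ) ≤ n + 1 := by exact_mod_cast (Nat.le_succ k).trans hk
      have next := step (k / (n + 1)) ⟨by positivity, (div_le_one hn_pos).2 hk'⟩
        (1 / (n + 1)) ⟨by positivity, hn.le⟩
      rw [← add_div] at next
      exact_mod_cast (ih (by lia)).trans next
  simpa [div_self hn_pos.ne'] using chain (n + 1) le_rfl

lemma slepian_inequality_add_smul_one (hS : S.PosSemidef) (hT : T.PosSemidef)
    (hdiag : ∀ i, S i i = T i i) (hle : ∀ i j, S i j ≤ T i j) {s : ℝ} (hs : 0 < s) :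
    multivariateGaussian m (S + s • (1 : Matrix ι ι ℝ)) (lowerOrthant a) ≤
      multivariateGaussian m (T + s • (1 : Matrix ι ι ℝ)) (lowerOrthant a) := by
  let D := (4⁻¹ : ℝ) • (T - S)
  have D_nonneg (i j) : 0 ≤ D i j := by simpa [D] using hle i j
  have symm_D : (2 : ℝ) • (D + Dᵀ) = T - S := by
    have hTS : (T - S)ᵀ = T - S := by
      simpa using (hT.isHermitian.sub hS.isHermitian).eq
    simp only [D, transpose_smul, hTS]
    module
  obtain ⟨r, hr, psd⟩ := exists_forall_le_posSemidef_smul_one_sub_smul_weightedLaplacian D_nonneg hs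
  let path (x : ℝ) := S + s • (1 : Matrix ι ι ℝ) + x • (T - S)
  have step : ∀ x ∈ Set.Icc (0 : ℝ) 1, ∀ h ∈ Set.Icc 0 r,
      multivariateGaussian m (path x) (lowerOrthant a) ≤
        multivariateGaussian m (path (x + h)) (lowerOrthant a) := by
    rintro x ⟨hx0, hx1⟩ h ⟨hh0, hhr⟩
    have path_add : path (x + h) = path x + (2 : ℝ) • (h • D + (h • D)ᵀ) := by
      rw [transpose_smul, ← smul_add, smul_comm, symm_D]
      module
    have path_sub : path x - weightedLaplacian (h • D) =
        (1 - x) • S + x • T + (s • (1 : Matrix ι ι ℝ) - h • weightedLaplacian D) := by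
      rw [weightedLaplacian_smul]
      module
    rw [path_add]
    refine multivariateGaussian_lowerOrthant_le_add_symm m a ?_
      (fun i j ↦ mul_nonneg hh0 (D_nonneg i j)) (fun i ↦ by simp [D, hdiag])
    rw [path_sub]
    exact ((hS.smul (by linarith)).add (hT.smul hx0)).add (psd h hh0 hhr)
  have path_zero : path 0 = S + s • (1 : Matrix ι ι ℝ) := by module
  have path_one : path 1 = T + s • (1 : Matrix ι ι ℝ) := by module
  simpa only [path_zero, path_one] using
    le_of_forall_short_step (f := fun x ↦ multivariateGaussian m (path x) (lowerOrthant a)) hr step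

theorem slepian_inequality (hS : S.PosSemidef) (hT : T.PosSemidef)
    (hdiag : ∀ i, S i i = T i i) (hle : ∀ i j, S i j ≤ T i j) :
    multivariateGaussian m S (lowerOrthant a) ≤ multivariateGaussian m T (lowerOrthant a) := by
  let noise (n : ℕ) : ℝ := 1 / (n + 1)
  have noise_pos (n : ℕ) : 0 < noise n := by positivity
  have psd_add {M : Matrix ι ι ℝ} (hM : M.PosSemidef) (n : ℕ) :
      (M + noise n • (1 : Matrix ι ι ℝ)).PosSemidef :=
    hM.add (PosSemidef.one.smul (noise_pos n).le)
  have tendsto_add (M : Matrix ι ι ℝ) :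
      Tendsto (fun n ↦ M + noise n • (1 : Matrix ι ι ℝ)) atTop (𝓝 M) := by
    simpa [noise] using (tendsto_one_div_add_atTop_nhds_zero_nat (𝕜 := ℝ)).smul_const
      (1 : Matrix ι ι ℝ) |>.const_add M
  have enlarged (η : ℝ) (hη : 0 < η) : multivariateGaussian m S (lowerOrthant a) ≤
      multivariateGaussian m T (lowerOrthant fun i ↦ a i + η) := by
    let U : Set (EuclideanSpace ℝ ι) := {x | ∀ i, x i < a i + η}
    have isOpen_U : IsOpen U := by
      simp only [U, Set.ofPred_forall]
      exact isOpen_iInter_of_finite fun i ↦ isOpen_lt (by fun_prop) continuous_const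
    calc multivariateGaussian m S (lowerOrthant a)
        ≤ multivariateGaussian m S U :=
          measure_mono fun x hx i ↦ (hx i).trans_lt (lt_add_of_pos_right _ hη)
      _ ≤ liminf (fun n ↦ multivariateGaussian m (S + noise n • (1 : Matrix ι ι ℝ)) U) atTop :=
          ProbabilityMeasure.le_liminf_measure_open_of_tendsto
            (tendsto_multivariateGaussian (psd_add hS) hS (tendsto_add S)) isOpen_U
      _ ≤ limsup (fun n ↦ multivariateGaussian m (T + noise n • (1 : Matrix ι ι ℝ))
            (lowerOrthant fun i ↦ a i + η)) atTop := by
          refine (liminf_le_liminf <| .of_forall fun n ↦ ?_).trans liminf_le_limsup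
          exact (measure_mono fun x hx i ↦ (hx i).le).trans
            (slepian_inequality_add_smul_one m _ hS hT hdiag hle (noise_pos n))
      _ ≤ multivariateGaussian m T (lowerOrthant fun i ↦ a i + η) :=
          ProbabilityMeasure.limsup_measure_closed_le_of_tendsto
            (tendsto_multivariateGaussian (psd_add hT) hT (tendsto_add T)) (isClosed_lowerOrthant _)
  exact ge_of_tendsto' (tendsto_measure_lowerOrthant_add_one_div _ a)
    fun n ↦ enlarged _ (noise_pos n)

end Slepian

section GaussianLaw

open Matrix WithLp

variable {Ω : Type*} {mΩ : MeasurableSpace Ω} {P : Measure Ω} {ι : Type*} [Fintype ι]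
  {X : ι → Ω → ℝ}

lemma covariance_self_of_hasLaw_gaussianReal {Y : Ω → ℝ} (hY : HasLaw Y (gaussianReal 0 1) P) :
    cov[Y, Y; P] = 1 := by
  rw [covariance_self hY.aemeasurable, hY.variance_eq, variance_id_gaussianReal, NNReal.coe_one]

/-- The covariance matrix `(Cov(Xᵢ, Xⱼ))ᵢⱼ` of a family of real random variables. -/
noncomputable def covarianceMatrix {ι : Type*} (X : ι → Ω → ℝ) (P : Measure Ω) : Matrix ι ι ℝ :=
  .of fun i j ↦ cov[X i, X j; P]

lemma covarianceBilin_map_toLp [IsFiniteMeasure P] (hX : ∀ i, MemLp (X i) 2 P)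
    (x y : EuclideanSpace ℝ ι) :
    covarianceBilin (P.map fun ω ↦ toLp 2 (X · ω)) x y =
      ofLp x ⬝ᵥ covarianceMatrix X P *ᵥ ofLp y := by
  rw [covarianceBilin_apply_pi hX]
  simp only [dotProduct, mulVec, covarianceMatrix, Matrix.of_apply, Finset.mul_sum, mul_assoc,
    mul_comm (cov[_, _; P])]

lemma posSemidef_covarianceMatrix {ι : Type*} [Finite ι] {X : ι → Ω → ℝ} [IsFiniteMeasure P]
    (hX : ∀ i, MemLp (X i) 2 P) : (covarianceMatrix X P).PosSemidef := by
  cases nonempty_fintype ι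
  refine PosSemidef.of_dotProduct_mulVec_nonneg ?_ fun c ↦ ?_
  · ext i j
    simp [covarianceMatrix, covariance_comm (X j)]
  · rw [star_trivial, ← ofLp_toLp 2 c, ← covarianceBilin_map_toLp hX]
    exact covarianceBilin_self_nonneg _

lemma map_toLp_eq_multivariateGaussian [DecidableEq ι]
    (hX : HasGaussianLaw (fun ω ↦ (X · ω)) P) :
    P.map (fun ω ↦ toLp 2 (X · ω)) =
      multivariateGaussian (toLp 2 fun i ↦ P[X i]) (covarianceMatrix X P) := by
  have := hX.isProbabilityMeasure
  have memLp (i : ι) : MemLp (X i) 2 P := (hX.eval i).memLp_two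
  have hlp := hX.toLp_pi 2
  have := hlp.isGaussian_map
  refine IsGaussian.ext ?_ ?_
  · rw [integral_id_multivariateGaussian', integral_map hlp.aemeasurable (by fun_prop)]
    ext i
    exact eval_integral_piLp (f := fun ω ↦ toLp 2 (X · ω)) (fun j ↦ (hX.eval j).integrable) i
  · ext x y
    rw [covarianceBilin_map_toLp memLp,
      covarianceBilin_multivariateGaussian (posSemidef_covarianceMatrix memLp)]

end GaussianLaw

section EquicorrelatedComparison

open Matrix WithLp

variable {ι : Type*} [Fintype ι] {τ a b t : ℝ}

lemma measureReal_gaussianReal_mul_le_neg_le (c : ℝ) (ht : 0 < t) :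
    (gaussianReal 0 1).real {z | c * z ≤ -t} ≤ c ^ 2 / t ^ 2 := by
  have chebyshev := meas_ge_le_variance_div_sq
    ((memLp_id_gaussianReal (μ := 0) (v := 1) 2).const_mul c) ht
  have variance_eq : Var[fun z ↦ c * id z; gaussianReal 0 1] = c ^ 2 := by
    rw [variance_const_mul, variance_id_gaussianReal, NNReal.coe_one, mul_one]
  rw [variance_eq, integral_const_mul] at chebyshev
  refine ENNReal.toReal_le_of_le_ofReal (by positivity)
    ((measure_mono fun z (hz : c * z ≤ -t) ↦ ?_).trans chebyshev)
  simpa using (le_neg_of_le_neg hz).trans (neg_le_abs _)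

/-- The comparison vector is `√τ Z + √(1 - τ) Zᵢ` with independent standard normal `Z`, `Zᵢ`: on the
event, either `√τ Z ≤ -t` or every `√(1 - τ) Zᵢ` is at most `a + t`. -/
lemma multivariateGaussian_equicorrelated_lowerOrthant_le [DecidableEq ι] (hτ : τ < 1)
    (hab : a + t ≤ √(1 - τ) * b) :
    multivariateGaussian 0 (√(1 - τ) ^ 2 • (1 : Matrix ι ι ℝ) +
        vecMulVec (fun _ ↦ √τ) fun _ ↦ √τ) (lowerOrthant fun _ ↦ a) ≤
      gaussianReal 0 1 {z | √τ * z ≤ -t} + gaussianReal 0 1 (Set.Iic b) ^ Fintype.card ι := by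
  have hc : 0 < √(1 - τ) := Real.sqrt_pos.2 (sub_pos.2 hτ)
  set μ := multivariateGaussian 0 (√(1 - τ) ^ 2 • (1 : Matrix ι ι ℝ))
  set O := lowerOrthant fun _ : ι ↦ √(1 - τ) * b
  have measure_O : μ O = gaussianReal 0 1 (Set.Iic b) ^ Fintype.card ι := by
    simp [μ, O, multivariateGaussian_smul_one_lowerOrthant hc, mul_div_cancel_left₀ _ hc.ne']
  have fibre_le (x : EuclideanSpace ℝ ι) :
      gaussianReal 0 1 {z | x + z • toLp 2 (fun _ ↦ √τ) ∈ lowerOrthant fun _ ↦ a} ≤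
        gaussianReal 0 1 {z | √τ * z ≤ -t} + O.indicator 1 x := by
    by_cases hx : x ∈ O
    · simpa [hx] using prob_le_one.trans le_add_self
    · obtain ⟨i, hi⟩ : ∃ i, √(1 - τ) * b < x i := by simpa [O, lowerOrthant] using hx
      rw [Set.indicator_of_notMem hx, add_zero]
      refine measure_mono fun z hz ↦ ?_
      have hzi : x i + z * √τ ≤ a := hz i
      rw [Set.mem_ofPred_eq]
      linarith
  rw [multivariateGaussian_add_vecMulVec_apply 0 (PosSemidef.one.smul (sq_nonneg _)) _
    (measurableSet_lowerOrthant _), ← measure_O]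
  calc ∫⁻ x, gaussianReal 0 1 {z | x + z • toLp 2 (fun _ ↦ √τ) ∈ lowerOrthant fun _ ↦ a} ∂μ
      ≤ ∫⁻ x, (gaussianReal 0 1 {z | √τ * z ≤ -t} + O.indicator 1 x) ∂μ := lintegral_mono fibre_le
    _ = gaussianReal 0 1 {z | √τ * z ≤ -t} + μ O := by
      rw [lintegral_add_left measurable_const, lintegral_const, measure_univ, mul_one,
        lintegral_indicator_one (measurableSet_lowerOrthant _)]

variable {Ω : Type*} {mΩ : MeasurableSpace Ω} {P : Measure Ω} {X : ι → Ω → ℝ}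

lemma measureReal_forall_le_of_covariance_le (hX : HasGaussianLaw (fun ω ↦ (X · ω)) P)
    (hmarg : ∀ i, HasLaw (X i) (gaussianReal 0 1) P) (hτ : 0 ≤ τ) (hτ' : τ < 1)
    (hcov : Pairwise fun i j ↦ cov[X i, X j; P] ≤ τ) (ht : 0 < t) (hab : a + t ≤ √(1 - τ) * b) :
    P.real {ω | ∀ i, X i ω ≤ a} ≤
      τ / t ^ 2 + (gaussianReal 0 1).real (Set.Iic b) ^ Fintype.card ι := by
  classical
  have := hX.isProbabilityMeasure
  have mean_zero : (toLp 2 fun i ↦ P[X i]) = 0 := by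
    ext i
    simp [(hmarg i).integral_eq]
  have diag_eq (i : ι) : cov[X i, X i; P] = 1 := covariance_self_of_hasLaw_gaussianReal (hmarg i)
  have event_eq : P {ω | ∀ i, X i ω ≤ a} =
      multivariateGaussian 0 (covarianceMatrix X P) (lowerOrthant fun _ ↦ a) := by
    rw [← mean_zero, ← map_toLp_eq_multivariateGaussian hX,
      Measure.map_apply_of_aemeasurable (hX.toLp_pi 2).aemeasurable (measurableSet_lowerOrthant _)]
    rfl
  have comparison := slepian_inequality 0 (fun _ ↦ a)
    (posSemidef_covarianceMatrix fun i ↦ (hX.eval i).memLp_two)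
    ((PosSemidef.one.smul (sq_nonneg √(1 - τ))).add (posSemidef_vecMulVec_self fun _ : ι ↦ √τ))
    (fun i ↦ ?_) (fun i j ↦ ?_)
  · have bound := ENNReal.toReal_mono (by finiteness)
      (comparison.trans (multivariateGaussian_equicorrelated_lowerOrthant_le hτ' hab))
    rw [← event_eq, ENNReal.toReal_add (by finiteness) (by finiteness), ENNReal.toReal_pow] at bound
    refine bound.trans (add_le_add_left ?_ _)
    simpa only [Real.sq_sqrt hτ, measureReal_def] using measureReal_gaussianReal_mul_le_neg_le √τ ht
  · simp [covarianceMatrix, vecMulVec_apply, diag_eq, Real.sq_sqrt (sub_nonneg.2 hτ'.le), hτ]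
  · rcases eq_or_ne i j with rfl | hij
    · simp [covarianceMatrix, vecMulVec_apply, diag_eq, Real.sq_sqrt (sub_nonneg.2 hτ'.le), hτ]
    · simpa [covarianceMatrix, vecMulVec_apply, hij, Real.mul_self_sqrt hτ] using hcov hij

end EquicorrelatedComparison

section StandardNormalTail

variable {u h : ℝ}

lemma measureReal_gaussianReal_eq_setIntegral (μ : ℝ) {v : NNReal} (hv : v ≠ 0) (s : Set ℝ) :
    (gaussianReal μ v).real s = ∫ x in s, gaussianPDFReal μ v x := by
  rw [measureReal_def, gaussianReal_apply_eq_integral _ hv,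
    ENNReal.toReal_ofReal (integral_nonneg fun x ↦ gaussianPDFReal_nonneg _ _ x)]

lemma gaussianPDFReal_neg_one_eq (h y : ℝ) :
    gaussianPDFReal (-h) 1 y = Real.exp (-(y * h) - h ^ 2 / 2) * gaussianPDFReal 0 1 y := by
  rw [gaussianPDFReal, gaussianPDFReal, mul_left_comm, ← Real.exp_add]
  congr 2
  push_cast
  ring

lemma measureReal_gaussianReal_Ioi_add (u h : ℝ) :
    (gaussianReal 0 1).real (Set.Ioi (u + h)) =
      ∫ y in Set.Ioi u, Real.exp (-(y * h) - h ^ 2 / 2) * gaussianPDFReal 0 1 y := by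
  simp only [← gaussianPDFReal_neg_one_eq]
  rw [← measureReal_gaussianReal_eq_setIntegral _ one_ne_zero, ← zero_sub,
    ← gaussianReal_map_sub_const, map_measureReal_apply (by fun_prop) measurableSet_Ioi]
  congr 1
  ext x
  simp

lemma integrable_exp_mul_gaussianPDFReal (h : ℝ) :
    Integrable fun y ↦ Real.exp (-(y * h) - h ^ 2 / 2) * gaussianPDFReal 0 1 y := by
  simpa only [← gaussianPDFReal_neg_one_eq] using integrable_gaussianPDFReal (-h) 1

lemma measureReal_gaussianReal_Ioi_add_le (u : ℝ) (hh : 0 ≤ h) :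
    (gaussianReal 0 1).real (Set.Ioi (u + h)) ≤
      Real.exp (-(u * h) - h ^ 2 / 2) * (gaussianReal 0 1).real (Set.Ioi u) := by
  rw [measureReal_gaussianReal_Ioi_add, measureReal_gaussianReal_eq_setIntegral _ one_ne_zero,
    ← integral_const_mul]
  refine setIntegral_mono_on (integrable_exp_mul_gaussianPDFReal h).integrableOn
    ((integrable_gaussianPDFReal 0 1).const_mul _).integrableOn measurableSet_Ioi
    fun y (hy : u < y) ↦ ?_
  have := gaussianPDFReal_nonneg 0 1 y
  gcongr

lemma le_measureReal_gaussianReal_Ioi_sub (u : ℝ) (hh : 0 ≤ h) :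
    Real.exp (u * h - h ^ 2 / 2) * (gaussianReal 0 1).real (Set.Ioi u) ≤
      (gaussianReal 0 1).real (Set.Ioi (u - h)) := by
  have shifted := measureReal_gaussianReal_Ioi_add_le (u - h) hh
  rw [sub_add_cancel] at shifted
  calc Real.exp (u * h - h ^ 2 / 2) * (gaussianReal 0 1).real (Set.Ioi u)
      ≤ Real.exp (u * h - h ^ 2 / 2) * (Real.exp (-((u - h) * h) - h ^ 2 / 2) *
          (gaussianReal 0 1).real (Set.Ioi (u - h))) := by gcongr
    _ = (gaussianReal 0 1).real (Set.Ioi (u - h)) := by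
      rw [← mul_assoc, ← Real.exp_add]
      ring_nf
      simp

lemma gaussianPDFReal_add_one_le_measureReal_Ioi (hu : 0 ≤ u) :
    gaussianPDFReal 0 1 (u + 1) ≤ (gaussianReal 0 1).real (Set.Ioi u) := by
  have pdf_ge (x : ℝ) (hx : x ∈ Set.Ioc u (u + 1)) :
      gaussianPDFReal 0 1 (u + 1) ≤ gaussianPDFReal 0 1 x := by
    have hx' : 0 ≤ x := hu.trans hx.1.le
    simp only [gaussianPDFReal, sub_zero]
    gcongr
    exact hx.2
  calc gaussianPDFReal 0 1 (u + 1)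
      = gaussianPDFReal 0 1 (u + 1) * volume.real (Set.Ioc u (u + 1)) := by simp
    _ ≤ ∫ x in Set.Ioc u (u + 1), gaussianPDFReal 0 1 x :=
      setIntegral_ge_of_const_le_real measurableSet_Ioc (by simp) pdf_ge
        (integrable_gaussianPDFReal 0 1).integrableOn
    _ = (gaussianReal 0 1).real (Set.Ioc u (u + 1)) :=
      (measureReal_gaussianReal_eq_setIntegral _ one_ne_zero _).symm
    _ ≤ (gaussianReal 0 1).real (Set.Ioi u) := measureReal_mono Set.Ioc_subset_Ioi_self

lemma measureReal_pow_le_exp_neg {α : Type*} {mα : MeasurableSpace α} (μ : Measure α)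
    [IsProbabilityMeasure μ] {s : Set α} (hs : MeasurableSet s) (n : ℕ) :
    μ.real s ^ n ≤ Real.exp (-(n * μ.real sᶜ)) := by
  rw [← mul_neg, Real.exp_nat_mul]
  gcongr
  calc μ.real s = 1 - μ.real sᶜ := by rw [probReal_compl_eq_one_sub hs, sub_sub_cancel]
    _ ≤ Real.exp (-μ.real sᶜ) := Real.one_sub_le_exp_neg _

end StandardNormalTail

section StandardNormalQuantile

lemma stdGaussianCDF_eq_measureReal (u : ℝ) :
    stdGaussianCDF u = (gaussianReal 0 1).real (Set.Iic u) := by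
  rw [measureReal_gaussianReal_eq_setIntegral _ one_ne_zero, stdGaussianCDF]
  congr 1 with x
  simp [gaussianPDFReal, div_eq_inv_mul]

lemma measureReal_gaussianReal_Ioi (u : ℝ) :
    (gaussianReal 0 1).real (Set.Ioi u) = 1 - stdGaussianCDF u := by
  rw [stdGaussianCDF_eq_measureReal, ← probReal_compl_eq_one_sub measurableSet_Iic, Set.compl_Iic]

lemma continuous_stdGaussianCDF : Continuous stdGaussianCDF := by
  have hpdf := integrable_gaussianPDFReal 0 1
  have eq_primitive (u : ℝ) : stdGaussianCDF u =
      (∫ x in (0 : ℝ)..u, gaussianPDFReal 0 1 x) + stdGaussianCDF 0 := by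
    simp only [stdGaussianCDF_eq_measureReal, measureReal_gaussianReal_eq_setIntegral _ one_ne_zero]
    rw [← sub_eq_iff_eq_add,
      intervalIntegral.integral_Iic_sub_Iic hpdf.integrableOn hpdf.integrableOn]
  rw [funext eq_primitive]
  exact (hpdf.continuous_primitive 0).add continuous_const

lemma strictMono_stdGaussianCDF : StrictMono stdGaussianCDF := by
  intro x y hxy
  have volume_pos : volume (Set.Ioc x y) ≠ 0 := by simp [hxy]
  have mass_pos : 0 < (gaussianReal 0 1).real (Set.Ioc x y) :=
    ENNReal.toReal_pos
      (fun h ↦ volume_pos (gaussianReal_absolutelyContinuous' 0 one_ne_zero h)) (measure_ne_top _ _)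
  rw [stdGaussianCDF_eq_measureReal, stdGaussianCDF_eq_measureReal,
    ← Set.Iic_union_Ioc_eq_Iic hxy.le,
    measureReal_union (Set.Iic_disjoint_Ioc le_rfl) measurableSet_Ioc]
  linarith

lemma stdGaussianCDF_lt_one (u : ℝ) : stdGaussianCDF u < 1 :=
  (strictMono_stdGaussianCDF (lt_add_one u)).trans_le
    ((stdGaussianCDF_eq_measureReal _).trans_le measureReal_le_one)

lemma stdGaussianQuantile_stdGaussianCDF (x : ℝ) : stdGaussianQuantile (stdGaussianCDF x) = x := by
  simp only [stdGaussianQuantile, strictMono_stdGaussianCDF.le_iff_le]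
  exact csInf_Ici

lemma stdGaussianCDF_stdGaussianQuantile {y : ℝ} (hy : y ∈ Set.Ioo (0 : ℝ) 1) :
    stdGaussianCDF (stdGaussianQuantile y) = y := by
  have cdf_eq : ⇑(cdf (gaussianReal 0 1)) = stdGaussianCDF :=
    funext fun x ↦ by rw [cdf_eq_real, stdGaussianCDF_eq_measureReal]
  have below := (cdf_eq ▸ tendsto_cdf_atBot (gaussianReal 0 1)).eventually_le_const hy.1
  have above := (cdf_eq ▸ tendsto_cdf_atTop (gaussianReal 0 1)).eventually_const_le hy.2
  obtain ⟨x, rfl⟩ := mem_range_of_exists_le_of_exists_ge continuous_stdGaussianCDF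
    below.exists above.exists
  rw [stdGaussianQuantile_stdGaussianCDF]

lemma one_sub_one_div_natCast_mem_Ioo {p : ℕ} (hp : 2 ≤ p) :
    1 - 1 / (p : ℝ) ∈ Set.Ioo (0 : ℝ) 1 := by
  have hp' : (1 : ℝ) < p := by exact_mod_cast hp
  exact ⟨sub_pos.2 ((div_lt_one (by positivity)).2 hp'), sub_lt_self _ (by positivity)⟩

lemma measureReal_gaussianReal_Ioi_stdGaussianQuantile {p : ℕ} (hp : 2 ≤ p) :
    (gaussianReal 0 1).real (Set.Ioi (stdGaussianQuantile (1 - 1 / p))) = 1 / p := by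
  rw [measureReal_gaussianReal_Ioi,
    stdGaussianCDF_stdGaussianQuantile (one_sub_one_div_natCast_mem_Ioo hp), sub_sub_cancel]

lemma tendsto_stdGaussianQuantile_one_sub_one_div :
    Tendsto (fun p : ℕ ↦ stdGaussianQuantile (1 - 1 / p)) atTop atTop := by
  have level_tendsto : Tendsto (fun p : ℕ ↦ 1 - 1 / (p : ℝ)) atTop (𝓝 1) := by
    simpa using tendsto_one_div_atTop_nhds_zero_nat.const_sub (1 : ℝ)
  refine tendsto_atTop.2 fun x ↦ ?_
  filter_upwards [level_tendsto.eventually_const_lt (stdGaussianCDF_lt_one x),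
    eventually_ge_atTop 2] with p hp hp2
  rw [← stdGaussianCDF_stdGaussianQuantile (one_sub_one_div_natCast_mem_Ioo hp2)] at hp
  exact (strictMono_stdGaussianCDF.lt_iff_lt.1 hp).le

lemma eventually_log_div_two_le_sq_stdGaussianQuantile :
    ∀ᶠ p : ℕ in atTop, Real.log p / 2 ≤ stdGaussianQuantile (1 - 1 / p) ^ 2 := by
  set c := √(2 * Real.pi)
  have : 0 < c := by positivity
  filter_upwards [tendsto_stdGaussianQuantile_one_sub_one_div.eventually_ge_atTop 2,
    tendsto_stdGaussianQuantile_one_sub_one_div.eventually_ge_atTop (Real.log c),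
    eventually_ge_atTop 2] with p
  intro hu2 huc hp
  have tail_eq := measureReal_gaussianReal_Ioi_stdGaussianQuantile hp
  set u := stdGaussianQuantile (1 - 1 / p)
  clear_value u
  have tail_ge : c⁻¹ * Real.exp (-(u + 1) ^ 2 / 2) ≤ 1 / p := by
    have pdf_le := gaussianPDFReal_add_one_le_measureReal_Ioi (zero_le_two.trans hu2)
    simpa [tail_eq, gaussianPDFReal, c] using pdf_le
  have log_le := Real.log_le_log (by positivity) tail_ge
  rw [Real.log_mul (by positivity) (by positivity), Real.log_exp, Real.log_inv, one_div,
    Real.log_inv] at log_le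
  nlinarith

end StandardNormalQuantile

section MaximumBounds

lemma exists_finset_pairwise_not_card_le {ι : Type*} [Fintype ι] (r : ι → ι → Prop) [Std.Refl r]
    [Std.Symm r] {N : ℕ} (hN : ∀ i, Nat.card {k | r k i} ≤ N) :
    ∃ I : Finset ι, (I : Set ι).Pairwise (fun i j ↦ ¬r i j) ∧ Fintype.card ι ≤ I.card * N := by
  classical
  obtain ⟨I, hI⟩ := (Set.toFinite {I : Finset ι | (I : Set ι).Pairwise fun i j ↦ ¬r i j})
    |>.exists_maximal ⟨∅, by simp⟩
  have : Std.Symm fun i j ↦ ¬r i j := ⟨fun _ _ h h' ↦ h (symm_of r h')⟩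
  have covered : (Finset.univ : Finset ι) ⊆ I.biUnion fun i ↦ {k | r k i} := by
    intro k _
    by_contra hk
    have not_rel (i : ι) (hi : i ∈ I) : ¬r k i := fun h ↦ hk (by simpa using ⟨i, hi, h⟩)
    have insert_indep : ((insert k I : Finset ι) : Set ι).Pairwise fun i j ↦ ¬r i j := by
      rw [Finset.coe_insert]
      exact hI.prop.insert_of_symm fun i hi _ ↦ not_rel i hi
    exact not_rel k (hI.le_of_ge insert_indep (Finset.subset_insert k I)
      (Finset.mem_insert_self k I)) (refl_of r k)
  refine ⟨I, hI.prop, (Finset.card_le_card covered).trans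
    (Finset.card_biUnion_le_card_mul _ _ _ fun i _ ↦ le_of_eq_of_le ?_ (hN i))⟩
  rw [Nat.card_eq_fintype_card]
  exact (Fintype.card_subtype _).symm

variable {Ω : Type*} {mΩ : MeasurableSpace Ω} {P : Measure Ω} {ι : Type*}
  {X : ι → Ω → ℝ} {τ δ u : ℝ} {N : ℕ}

lemma measureReal_forall_le_neg_le [Nonempty ι] (hmarg : ∀ i, HasLaw (X i) (gaussianReal 0 1) P)
    (u : ℝ) :
    P.real {ω | ∀ i, X i ω ≤ -u} ≤ (gaussianReal 0 1).real (Set.Ioi u) := by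
  obtain ⟨i⟩ := ‹Nonempty ι›
  have := (hmarg i).isProbabilityMeasure
  have := nullSingletonClass_gaussianReal (μ := 0) (v := 1) one_ne_zero
  calc P.real {ω | ∀ i, X i ω ≤ -u}
      ≤ P.real {ω | X i ω ≤ -u} := measureReal_mono fun ω hω ↦ hω i
    _ = (gaussianReal 0 1).real (Set.Iic (-u)) := (hmarg i).measureReal_eq measurableSet_Iic
    _ = (gaussianReal 0 1).real (Set.Ioi u) := by
      rw [measureReal_def, ← gaussianReal_zero_preimage_neg 1 measurableSet_Iic, Set.neg_preimage,
        Set.neg_Iic, neg_neg, measureReal_def, measure_congr Ioi_ae_eq_Ici]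

lemma exists_lt_or_forall_le_of_lt_abs_iSup_div_sub_one [Finite ι] [Nonempty ι] {x : ι → ℝ}
    (hu : 0 < u) (h : δ < |(⨆ i, x i) / u - 1|) :
    (∃ i, (1 + δ) * u < x i) ∨ ∀ i, x i ≤ (1 - δ) * u := by
  rcases lt_abs.1 h with above | below
  · have : (1 + δ) * u < ⨆ i, x i := (lt_div_iff₀ hu).1 (by linarith)
    exact .inl (exists_lt_of_lt_ciSup this)
  · have : ⨆ i, x i < (1 - δ) * u := (div_lt_iff₀ hu).1 (by linarith)
    exact .inr fun i ↦ (le_ciSup (Set.finite_range x).bddAbove i).trans this.le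

lemma pos_of_card_covariance_le [Finite ι] [Nonempty ι]
    (hmarg : ∀ i, HasLaw (X i) (gaussianReal 0 1) P) (hτ : τ < 1)
    (hN : ∀ i, Nat.card {k | τ < cov[X k, X i; P]} ≤ N) :
    0 < N := by
  obtain ⟨i⟩ := ‹Nonempty ι›
  have self_mem : i ∈ {k | τ < cov[X k, X i; P]} :=
    hτ.trans_eq (covariance_self_of_hasLaw_gaussianReal (hmarg i)).symm
  have : Nonempty {k | τ < cov[X k, X i; P]} := ⟨i, self_mem⟩
  exact Nat.card_pos.trans_le (hN i)

lemma one_sub_mul_add_le_sqrt_one_sub_mul (hτ : 0 ≤ τ) (hτδ : τ ≤ δ / 4) (hδ : δ ≤ 2)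
    (hu : 0 ≤ u) : (1 - δ) * u + δ * u / 4 ≤ √(1 - τ) * (u - δ * u / 2) := by
  have sqrt_ge : 1 - τ ≤ √(1 - τ) := Real.le_sqrt_of_sq_le (by nlinarith)
  have factor_le : 1 - δ + δ / 4 ≤ √(1 - τ) * (1 - δ / 2) := by nlinarith
  calc (1 - δ) * u + δ * u / 4 = (1 - δ + δ / 4) * u := by ring
    _ ≤ √(1 - τ) * (1 - δ / 2) * u := by gcongr
    _ = √(1 - τ) * (u - δ * u / 2) := by ring

variable [Fintype ι]

lemma measureReal_exists_lt_le (hmarg : ∀ i, HasLaw (X i) (gaussianReal 0 1) P) (x : ℝ) :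
    P.real {ω | ∃ i, x < X i ω} ≤ Fintype.card ι * (gaussianReal 0 1).real (Set.Ioi x) := by
  rw [Set.ofPred_exists]
  refine (measureReal_iUnion_fintype_le _).trans_eq ?_
  have each_eq (i : ι) : P.real {ω | x < X i ω} = (gaussianReal 0 1).real (Set.Ioi x) :=
    (hmarg i).measureReal_eq measurableSet_Ioi
  simp [each_eq]

lemma measureReal_forall_le_of_card_covariance_le {a b t : ℝ}
    (hX : HasGaussianLaw (fun ω ↦ (X · ω)) P)
    (hmarg : ∀ i, HasLaw (X i) (gaussianReal 0 1) P) (hτ : 0 ≤ τ) (hτ' : τ < 1)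
    (hN : ∀ i, Nat.card {k | τ < cov[X k, X i; P]} ≤ N)
    (ht : 0 < t) (hab : a + t ≤ √(1 - τ) * b) :
    P.real {ω | ∀ i, X i ω ≤ a} ≤
      τ / t ^ 2 + Real.exp (-(Fintype.card ι / N * (gaussianReal 0 1).real (Set.Ioi b))) := by
  have := hX.isProbabilityMeasure
  let r : ι → ι → Prop := fun k i ↦ τ < cov[X k, X i; P]
  have : Std.Refl r :=
    ⟨fun i ↦ hτ'.trans_eq (covariance_self_of_hasLaw_gaussianReal (hmarg i)).symm⟩
  have : Std.Symm r := ⟨fun i j h ↦ h.trans_eq (covariance_comm (X i) (X j))⟩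
  obtain ⟨I, indep, card_le⟩ := exists_finset_pairwise_not_card_le r hN
  have hXI : HasGaussianLaw (fun ω ↦ fun i : I ↦ X i ω) P :=
    hX.map_fun (ContinuousLinearMap.pi fun i : I ↦ ContinuousLinearMap.proj (i : ι))
  have hcov : Pairwise fun i j : I ↦ cov[X i, X j; P] ≤ τ := fun i j hij ↦
    not_lt.1 (indep i.2 j.2 (Subtype.coe_ne_coe.2 hij))
  have card_div_le : (Fintype.card ι / N : ℝ) ≤ Fintype.card I := by
    rw [Fintype.card_coe]
    exact div_le_of_le_mul₀ (by positivity) (by positivity) (by exact_mod_cast card_le)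
  calc P.real {ω | ∀ i, X i ω ≤ a}
      ≤ P.real {ω | ∀ i : I, X i ω ≤ a} := measureReal_mono fun ω hω i ↦ hω i
    _ ≤ τ / t ^ 2 + (gaussianReal 0 1).real (Set.Iic b) ^ Fintype.card I :=
      measureReal_forall_le_of_covariance_le hXI (fun i ↦ hmarg i) hτ hτ' hcov ht hab
    _ ≤ τ / t ^ 2 + Real.exp (-(Fintype.card I * (gaussianReal 0 1).real (Set.Ioi b))) := by
      gcongr
      simpa using measureReal_pow_le_exp_neg (gaussianReal 0 1) (measurableSet_Iic (a := b))
        (Fintype.card I)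
    _ ≤ τ / t ^ 2 + Real.exp (-(Fintype.card ι / N * (gaussianReal 0 1).real (Set.Ioi b))) := by
      gcongr

lemma measureReal_exists_one_add_mul_lt_le (hmarg : ∀ i, HasLaw (X i) (gaussianReal 0 1) P)
    (hu : 0 ≤ u) (hδ : 0 ≤ δ) (hQ : Fintype.card ι * (gaussianReal 0 1).real (Set.Ioi u) = 1) :
    P.real {ω | ∃ i, (1 + δ) * u < X i ω} ≤ Real.exp (-(δ * u ^ 2)) :=
  calc P.real {ω | ∃ i, (1 + δ) * u < X i ω}
      ≤ Fintype.card ι * (gaussianReal 0 1).real (Set.Ioi (u + δ * u)) := by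
        simpa only [add_mul, one_mul] using measureReal_exists_lt_le hmarg (u + δ * u)
    _ ≤ Fintype.card ι * (Real.exp (-(u * (δ * u)) - (δ * u) ^ 2 / 2) *
          (gaussianReal 0 1).real (Set.Ioi u)) := by
        gcongr
        exact measureReal_gaussianReal_Ioi_add_le u (by positivity)
    _ = Real.exp (-(u * (δ * u)) - (δ * u) ^ 2 / 2) := by rw [mul_left_comm, hQ, mul_one]
    _ ≤ Real.exp (-(δ * u ^ 2)) := by
        gcongr
        nlinarith [sq_nonneg (δ * u)]

lemma measureReal_forall_le_one_sub_mul_le (hX : HasGaussianLaw (fun ω ↦ (X · ω)) P)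
    (hmarg : ∀ i, HasLaw (X i) (gaussianReal 0 1) P) (hτ : 0 ≤ τ) (hτδ : τ ≤ δ / 4)
    (hN : ∀ i, Nat.card {k | τ < cov[X k, X i; P]} ≤ N) (hu : 0 < u) (hδ : 0 < δ) (hδ2 : δ < 2)
    (hQ : Fintype.card ι * (gaussianReal 0 1).real (Set.Ioi u) = 1) :
    P.real {ω | ∀ i, X i ω ≤ (1 - δ) * u} ≤
      16 * (τ / δ) / (δ * u ^ 2) + Real.exp (-Real.exp (δ * u ^ 2 / 4 - Real.log N)) := by
  have : Nonempty ι := Fintype.card_pos_iff.1 (Nat.pos_of_ne_zero fun h ↦ by simp [h] at hQ)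
  have N_pos : (0 : ℝ) < N := by
    exact_mod_cast pos_of_card_covariance_le hmarg (by linarith) hN
  have tail_ge : Real.exp (δ * u ^ 2 / 4) ≤
      Fintype.card ι * (gaussianReal 0 1).real (Set.Ioi (u - δ * u / 2)) :=
    calc Real.exp (δ * u ^ 2 / 4)
        ≤ Real.exp (u * (δ * u / 2) - (δ * u / 2) ^ 2 / 2) := by
          gcongr
          nlinarith [mul_pos hδ (pow_pos hu 2)]
      _ = Fintype.card ι * (Real.exp (u * (δ * u / 2) - (δ * u / 2) ^ 2 / 2) *
            (gaussianReal 0 1).real (Set.Ioi u)) := by rw [mul_left_comm, hQ, mul_one]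
      _ ≤ Fintype.card ι * (gaussianReal 0 1).real (Set.Ioi (u - δ * u / 2)) := by
          gcongr
          exact le_measureReal_gaussianReal_Ioi_sub u (by positivity)
  calc P.real {ω | ∀ i, X i ω ≤ (1 - δ) * u}
      ≤ τ / (δ * u / 4) ^ 2 + Real.exp (-(Fintype.card ι / N *
          (gaussianReal 0 1).real (Set.Ioi (u - δ * u / 2)))) :=
        measureReal_forall_le_of_card_covariance_le hX hmarg hτ (by linarith) hN (by positivity)
          (one_sub_mul_add_le_sqrt_one_sub_mul hτ hτδ hδ2.le hu.le)
    _ ≤ 16 * (τ / δ) / (δ * u ^ 2) + Real.exp (-Real.exp (δ * u ^ 2 / 4 - Real.log N)) := by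
        rw [div_mul_eq_mul_div, Real.exp_sub, Real.exp_log N_pos,
          show τ / (δ * u / 4) ^ 2 = 16 * (τ / δ) / (δ * u ^ 2) by field_simp; ring]
        gcongr

lemma measureReal_lt_abs_iSup_div_sub_one_le [Nonempty ι]
    (hX : HasGaussianLaw (fun ω ↦ (X · ω)) P) (hmarg : ∀ i, HasLaw (X i) (gaussianReal 0 1) P)
    (hτ : 0 ≤ τ) (hτδ : τ ≤ δ / 4) (hN : ∀ i, Nat.card {k | τ < cov[X k, X i; P]} ≤ N)
    (hu : 0 < u) (hδ : 0 < δ)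
    (hQ : Fintype.card ι * (gaussianReal 0 1).real (Set.Ioi u) = 1) :
    P.real {ω | δ < |(⨆ i, X i ω) / u - 1|} ≤
      Real.exp (-(δ * u ^ 2)) + 16 * (τ / δ) / (δ * u ^ 2) +
        Real.exp (-Real.exp (δ * u ^ 2 / 4 - Real.log N)) + 1 / Fintype.card ι := by
  have := hX.isProbabilityMeasure
  have lower : P.real {ω | ∀ i, X i ω ≤ (1 - δ) * u} ≤
      16 * (τ / δ) / (δ * u ^ 2) + Real.exp (-Real.exp (δ * u ^ 2 / 4 - Real.log N)) +
        1 / Fintype.card ι := by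
    rcases lt_or_ge δ 2 with hδ2 | hδ2
    · exact (measureReal_forall_le_one_sub_mul_le hX hmarg hτ hτδ hN hu hδ hδ2 hQ).trans
        (le_add_of_nonneg_right (by positivity))
    · refine le_add_of_nonneg_of_le (by positivity) ?_
      rw [← eq_one_div_of_mul_eq_one_right hQ]
      exact (measureReal_mono fun ω hω i ↦ (hω i).trans (by nlinarith)).trans
        (measureReal_forall_le_neg_le hmarg u)
  calc P.real {ω | δ < |(⨆ i, X i ω) / u - 1|}
      ≤ P.real ({ω | ∃ i, (1 + δ) * u < X i ω} ∪ {ω | ∀ i, X i ω ≤ (1 - δ) * u}) :=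
        measureReal_mono fun ω hω ↦ exists_lt_or_forall_le_of_lt_abs_iSup_div_sub_one hu hω
    _ ≤ P.real {ω | ∃ i, (1 + δ) * u < X i ω} + P.real {ω | ∀ i, X i ω ≤ (1 - δ) * u} :=
        measureReal_union_le _ _
    _ ≤ Real.exp (-(δ * u ^ 2)) + (16 * (τ / δ) / (δ * u ^ 2) +
          Real.exp (-Real.exp (δ * u ^ 2 / 4 - Real.log N)) + 1 / Fintype.card ι) :=
        add_le_add (measureReal_exists_one_add_mul_lt_le hmarg hu.le hδ.le hQ) lower
    _ = Real.exp (-(δ * u ^ 2)) + 16 * (τ / δ) / (δ * u ^ 2) +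
          Real.exp (-Real.exp (δ * u ^ 2 / 4 - Real.log N)) + 1 / Fintype.card ι := by ring

end MaximumBounds

section RateOfConcentration

variable {δ : ℕ → ℝ}

lemma tendsto_mul_sq_stdGaussianQuantile_atTop (hδ : ∀ p, 0 < δ p)
    (hlog : Tendsto (fun p : ℕ ↦ 1 / Real.log p / δ p) atTop (𝓝 0)) :
    Tendsto (fun p : ℕ ↦ δ p * stdGaussianQuantile (1 - 1 / p) ^ 2) atTop atTop := by
  have log_pos := (Real.tendsto_log_atTop.comp tendsto_natCast_atTop_atTop).eventually_gt_atTop 0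
  have inv_tendsto : Tendsto (fun p : ℕ ↦ (1 / Real.log p / δ p)⁻¹) atTop atTop := by
    refine (tendsto_nhdsWithin_iff.2 ⟨hlog, ?_⟩).inv_tendsto_nhdsGT_zero
    filter_upwards [log_pos] with p (hp : 0 < Real.log p)
    have := hδ p
    rw [Set.mem_Ioi]
    positivity
  refine tendsto_atTop_mono' atTop ?_ (inv_tendsto.atTop_div_const zero_lt_two)
  filter_upwards [eventually_log_div_two_le_sq_stdGaussianQuantile] with p hp
  calc (1 / Real.log p / δ p)⁻¹ / 2 = δ p * (Real.log p / 2) := by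
        rw [inv_div, div_div_eq_mul_div, div_one]
        ring
    _ ≤ δ p * stdGaussianQuantile (1 - 1 / p) ^ 2 := by
        have := hδ p
        gcongr

lemma eventually_log_le_mul_sq_stdGaussianQuantile {N : ℕ → ℕ} {c : ℝ} (hc : 0 < c)
    (hδ : ∀ p, 0 < δ p)
    (hN : Tendsto (fun p : ℕ ↦ Real.log (N p) / Real.log p / δ p) atTop (𝓝 0)) :
    ∀ᶠ p : ℕ in atTop, Real.log (N p) ≤ c * (δ p * stdGaussianQuantile (1 - 1 / p) ^ 2) := by
  have log_pos := (Real.tendsto_log_atTop.comp tendsto_natCast_atTop_atTop).eventually_gt_atTop 0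
  filter_upwards [log_pos, hN.eventually_le_const (half_pos hc),
    eventually_log_div_two_le_sq_stdGaussianQuantile] with p (hp : 0 < Real.log p) hNp hu
  have hδp := hδ p
  rw [div_div, div_le_iff₀ (by positivity)] at hNp
  calc Real.log (N p) ≤ c / 2 * (Real.log p * δ p) := hNp
    _ = c * (δ p * (Real.log p / 2)) := by ring
    _ ≤ c * (δ p * stdGaussianQuantile (1 - 1 / p) ^ 2) := by gcongr

lemma tendsto_concentration_bound {s r : ℕ → ℝ} (hs : Tendsto s atTop atTop)
    (hr : Tendsto r atTop (𝓝 0)) :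
    Tendsto (fun p : ℕ ↦ Real.exp (-s p) + 16 * r p / s p + Real.exp (-Real.exp (s p / 8)) + 1 / p)
      atTop (𝓝 0) := by
  have exp_neg := Real.tendsto_exp_neg_atTop_nhds_zero.comp hs
  have ratio := (hr.const_mul 16).div_atTop hs
  have exp_neg_exp := Real.tendsto_exp_neg_atTop_nhds_zero.comp
    (Real.tendsto_exp_atTop.comp (hs.atTop_div_const (r := 8) (by norm_num)))
  simpa using ((exp_neg.add ratio).add exp_neg_exp).add
    (tendsto_one_div_atTop_nhds_zero_nat (𝕜 := ℝ))

lemma tendsto_div_of_tendsto_add_add_div {a b c : ℕ → ℝ} (ha : ∀ p, 0 ≤ a p) (hb : ∀ p, 0 ≤ b p)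
    (hc : ∀ p, 0 ≤ c p) (hδ : ∀ p, 0 < δ p)
    (h : Tendsto (fun p ↦ (a p + b p + c p) / δ p) atTop (𝓝 0)) :
    Tendsto (fun p ↦ a p / δ p) atTop (𝓝 0) ∧ Tendsto (fun p ↦ b p / δ p) atTop (𝓝 0) ∧
      Tendsto (fun p ↦ c p / δ p) atTop (𝓝 0) := by
  have of_le {f : ℕ → ℝ} (hf : ∀ p, 0 ≤ f p) (hle : ∀ p, f p ≤ a p + b p + c p) :
      Tendsto (fun p ↦ f p / δ p) atTop (𝓝 0) :=
    squeeze_zero (fun p ↦ div_nonneg (hf p) (hδ p).le)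
      (fun p ↦ div_le_div_of_nonneg_right (hle p) (hδ p).le) h
  exact ⟨of_le ha fun p ↦ by linarith [hb p, hc p], of_le hb fun p ↦ by linarith [ha p, hc p],
    of_le hc fun p ↦ by linarith [ha p, hb p]⟩

theorem rate_of_concentration_UDD_general {Ω : ℕ → Type*} {mΩ : ∀ p, MeasurableSpace (Ω p)}
    {P : ∀ p, Measure (Ω p)} {ε : ∀ p, Fin p → Ω p → ℝ}
    (hX : ∀ p, HasGaussianLaw (fun ω ↦ (ε p · ω)) (P p))
    (hmarg : ∀ p i, HasLaw (ε p i) (gaussianReal 0 1) (P p)) {N : ℕ → ℕ} {τ : ℕ → ℝ}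
    (hτ : ∀ p, 0 ≤ τ p) (hN : ∀ p i, Nat.card {k | τ p < cov[ε p k, ε p i; P p]} ≤ N p)
    (hδ : ∀ p, 0 < δ p)
    (hrate : Tendsto (fun p : ℕ ↦ (Real.log (N p) / Real.log p + τ p + 1 / Real.log p) / δ p)
      atTop (𝓝 0)) :
    Tendsto (fun p : ℕ ↦
        P p {ω | δ p < |(⨆ i, ε p i ω) / stdGaussianQuantile (1 - 1 / p) - 1|})
      atTop (𝓝 0) := by
  have := fun p ↦ (hX p).isProbabilityMeasure
  obtain ⟨α_rate, τ_rate, log_rate⟩ := tendsto_div_of_tendsto_add_add_div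
    (fun p ↦ div_nonneg (Real.log_natCast_nonneg (N p)) (Real.log_natCast_nonneg p)) hτ
    (fun p ↦ one_div_nonneg.2 (Real.log_natCast_nonneg p)) hδ hrate
  have exponent_tendsto := tendsto_mul_sq_stdGaussianQuantile_atTop hδ log_rate
  refine (ENNReal.tendsto_toReal_iff (by finiteness) ENNReal.zero_ne_top).1 <|
    squeeze_zero' (.of_forall fun p ↦ ENNReal.toReal_nonneg) ?_
      (tendsto_concentration_bound exponent_tendsto τ_rate)
  filter_upwards [eventually_ge_atTop 2,
    tendsto_stdGaussianQuantile_one_sub_one_div.eventually_gt_atTop 0,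
    τ_rate.eventually_le_const (show (0 : ℝ) < 1 / 4 by norm_num),
    eventually_log_le_mul_sq_stdGaussianQuantile (show (0 : ℝ) < 1 / 8 by norm_num) hδ α_rate]
    with p hp hu hτp hNp
  rw [div_le_iff₀ (hδ p)] at hτp
  have : Nonempty (Fin p) := ⟨0, by lia⟩
  have hQ : Fintype.card (Fin p) *
      (gaussianReal 0 1).real (Set.Ioi (stdGaussianQuantile (1 - 1 / p))) = 1 := by
    rw [Fintype.card_fin, measureReal_gaussianReal_Ioi_stdGaussianQuantile hp]
    field_simp
  refine (measureReal_lt_abs_iSup_div_sub_one_le (hX p) (hmarg p) (hτ p) (by linarith) (hN p) hu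
    (hδ p) hQ).trans ?_
  rw [Fintype.card_fin]
  gcongr
  linarith

end RateOfConcentration

section MeasureSpace

variable {Ω : Type*} [MeasureSpace Ω]

lemma hasGaussianLaw_of_isJointGaussian {ι : Type*} [Fintype ι] {X : ι → Ω → ℝ}
    (hmeas : ∀ i, AEMeasurable (X i) ℙ) (hX : IsJointGaussian X) :
    HasGaussianLaw (fun ω ↦ (X · ω)) (ℙ : Measure Ω) := by
  classical
  have hmeas' : AEMeasurable (fun ω ↦ (X · ω)) (ℙ : Measure Ω) := aemeasurable_pi_iff.2 hmeas
  refine ⟨isGaussian_of_map_eq_gaussianReal fun L ↦ ?_⟩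
  obtain ⟨m, v, law⟩ := hX fun i ↦ L fun j ↦ if i = j then 1 else 0
  refine ⟨m, v, ?_⟩
  rw [AEMeasurable.map_map_of_aemeasurable (by fun_prop) hmeas', ← law]
  congr 1 with ω
  simpa [mul_comm] using L.toLinearMap.pi_apply_eq_sum_univ (X · ω)

lemma covar_eq_covariance {Y Z : Ω → ℝ} (hY : HasGaussianLaw Y (ℙ : Measure Ω))
    (hZ : HasGaussianLaw Z (ℙ : Measure Ω)) : covar Y Z = cov[Y, Z; ℙ] :=
  have := hY.isProbabilityMeasure
  (covariance_eq_sub hY.memLp_two hZ.memLp_two).symm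

end MeasureSpace

/-- Rate of concentration of maxima for UDD Gaussian triangular arrays: if
`N_ℰ(τ)` is the UDD packing function, `τ(p) → 0` with
`α(p) = log N_ℰ(τ(p)) / log p → 0`, then for every positive sequence `δ_p` with
`(α(p) + τ(p) + 1/log p)/δ_p → 0` we have
`P(|max_{i∈[p]} ε_p(i)/u_p - 1| > δ_p) → 0`, where `u_p = Φ^{←}(1 - 1/p)`. -/
theorem rate_of_concentration_UDD
    {Ω : Type*} [MeasureSpace Ω] [IsProbabilityMeasure (ℙ : Measure Ω)]
    (ε : (p : ℕ) → Fin p → Ω → ℝ)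
    (hmeas : ∀ p i, Measurable (ε p i))
    (hGauss : ∀ p, IsJointGaussian (ε p))
    (hmarg : ∀ p i, Measure.map (ε p i) ℙ = gaussianReal 0 1)
    (N : ℝ → ℕ)
    (hUDD : ∀ τ : ℝ, 0 < τ → ∀ p : ℕ, ∀ i : Fin p,
      Nat.card {k : Fin p | τ < covar (ε p k) (ε p i)} ≤ N τ)
    (τ : ℕ → ℝ) (hτ_pos : ∀ p, 0 < τ p) (hτ0 : Tendsto τ atTop (𝓝 0))
    (hα : Tendsto (fun p : ℕ => Real.log (N (τ p)) / Real.log p) atTop (𝓝 0))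
    (δ : ℕ → ℝ) (hδ_pos : ∀ p, 0 < δ p)
    (hrate : Tendsto (fun p : ℕ =>
        (Real.log (N (τ p)) / Real.log p + τ p + 1 / Real.log p) / δ p)
      atTop (𝓝 0)) :
    Tendsto (fun p : ℕ =>
        ℙ {ω | δ p <
            |(⨆ i : Fin p, ε p i ω) / stdGaussianQuantile (1 - 1 / p) - 1|})
      atTop (𝓝 0) := by
  have hlaw (p : ℕ) (i : Fin p) : HasLaw (ε p i) (gaussianReal 0 1) ℙ :=
    ⟨(hmeas p i).aemeasurable, hmarg p i⟩
  simp only [covar_eq_covariance (hlaw _ _).hasGaussianLaw (hlaw _ _).hasGaussianLaw] at hUDD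
  exact rate_of_concentration_UDD_general
    (fun p ↦ hasGaussianLaw_of_isJointGaussian (fun i ↦ (hmeas p i).aemeasurable) (hGauss p))
    hlaw (fun p ↦ (hτ_pos p).le) (fun p ↦ hUDD (τ p) (hτ_pos p) p) hδ_pos hrate
end

section
/- Let ℰ = {ε_p(i), i ∈ [p]} be an arbitrary Gaussian triangular array with standard Normal marginals (arbitrary dependence), set u_p = Φ^{←}(1 − 1/p) and ξ_p := u_p^{−1} max_{i∈[p]} ε_p(i). If δ_p → 0 is a positive sequence with (1/log p)/δ_p → 0, then δ_p^{−1}·E[(ξ_p − 1)_+] → 0 as p → ∞, and consequently P(ξ_p > 1 + δ_p) → 0 as p → ∞. -/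
open MeasureTheory ProbabilityTheory Filter Topology

/-!
The expected excess of a maximum is at most the sum of the expected excesses, whatever the
dependence. Stein's identity `E[Z f(Z)] = E[f'(Z)]` for `f = (· - u)_+` gives
`u E[(Z - u)_+] ≤ E[Z (Z - u)_+] = P(Z > u)`, and `p P(Z > u_p) ≤ 1` by the choice of `u_p`.
Hence `E[(ξ_p - 1)_+] ≤ 1 / u_p²`, which is of order `1 / log p`. The second limit is Markov's
inequality.
-/

section Gaussian

variable {μ : ℝ} {v : NNReal}

lemma integrableOn_gaussianReal_iff (hv : v ≠ 0) {f : ℝ → ℝ} {s : Set ℝ} (hs : MeasurableSet s) :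
    IntegrableOn f s (gaussianReal μ v) ↔
      IntegrableOn (fun x => gaussianPDFReal μ v x * f x) s := by
  rw [IntegrableOn, IntegrableOn, gaussianReal_of_var_ne_zero μ hv, restrict_withDensity hs,
    integrable_withDensity_iff_integrable_smul' (measurable_gaussianPDF μ v)
      (ae_of_all _ fun _ => gaussianPDF_lt_top)]
  simp only [toReal_gaussianPDF, smul_eq_mul]

lemma setIntegral_gaussianReal (hv : v ≠ 0) (f : ℝ → ℝ) {s : Set ℝ} (hs : MeasurableSet s) :
    ∫ x in s, f x ∂gaussianReal μ v = ∫ x in s, gaussianPDFReal μ v x * f x := by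
  rw [gaussianReal_of_var_ne_zero μ hv,
    setIntegral_withDensity_eq_setIntegral_toReal_smul (measurable_gaussianPDF μ v)
      (ae_of_all _ fun _ => gaussianPDF_lt_top) f hs]
  simp only [toReal_gaussianPDF, smul_eq_mul]

lemma measureReal_gaussianReal (hv : v ≠ 0) {s : Set ℝ} (hs : MeasurableSet s) :
    (gaussianReal μ v).real s = ∫ x in s, gaussianPDFReal μ v x := by
  simpa using setIntegral_gaussianReal (μ := μ) hv (fun _ => 1) hs

lemma hasDerivAt_gaussianPDFReal (μ : ℝ) (v : NNReal) (x : ℝ) :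
    HasDerivAt (gaussianPDFReal μ v) (-((x - μ) / v) * gaussianPDFReal μ v x) x := by
  have h := ((((hasDerivAt_id x).sub_const μ).pow 2).neg.div_const (2 * (v : ℝ))).exp.const_mul
    (Real.sqrt (2 * Real.pi * v))⁻¹
  rw [gaussianPDFReal_def]
  convert! h using 1
  simp
  ring

lemma antitoneOn_gaussianPDFReal (μ : ℝ) (v : NNReal) :
    AntitoneOn (gaussianPDFReal μ v) (Set.Ici μ) := by
  intro x hx y _ hxy
  have hx' : 0 ≤ x - μ := sub_nonneg.mpr hx
  simp only [gaussianPDFReal]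
  gcongr

lemma mul_gaussianPDFReal_add_le_measureReal_Ioi (hv : v ≠ 0) {x h : ℝ} (hx : μ ≤ x) (hh : 0 ≤ h) :
    h * gaussianPDFReal μ v (x + h) ≤ (gaussianReal μ v).real (Set.Ioi x) :=
  calc h * gaussianPDFReal μ v (x + h)
      = gaussianPDFReal μ v (x + h) * volume.real (Set.Ioc x (x + h)) := by
        simp [hh, mul_comm]
    _ ≤ ∫ t in Set.Ioc x (x + h), gaussianPDFReal μ v t :=
        setIntegral_ge_of_const_le_real measurableSet_Ioc measure_Ioc_lt_top.ne
          (fun t ht => antitoneOn_gaussianPDFReal μ v (hx.trans ht.1.le)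
            (hx.trans (ht.1.le.trans ht.2)) ht.2)
          (integrable_gaussianPDFReal μ v).integrableOn
    _ = (gaussianReal μ v).real (Set.Ioc x (x + h)) :=
        (measureReal_gaussianReal hv measurableSet_Ioc).symm
    _ ≤ (gaussianReal μ v).real (Set.Ioi x) := measureReal_mono Set.Ioc_subset_Ioi_self

-- Stein's identity on a half-line: integrate the derivative of `f * gaussianPDFReal μ v`.
lemma integral_Ioi_sub_mean_mul_gaussianReal (hv : v ≠ 0) {f f' : ℝ → ℝ} {a : ℝ}
    (hf : ∀ x ∈ Set.Ici a, HasDerivAt f (f' x) x)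
    (hf_int : IntegrableOn f (Set.Ioi a) (gaussianReal μ v))
    (hf'_int : IntegrableOn f' (Set.Ioi a) (gaussianReal μ v))
    (hxf_int : IntegrableOn (fun x => (x - μ) * f x) (Set.Ioi a) (gaussianReal μ v)) :
    ∫ x in Set.Ioi a, (x - μ) * f x ∂gaussianReal μ v
      = v * (gaussianPDFReal μ v a * f a + ∫ x in Set.Ioi a, f' x ∂gaussianReal μ v) := by
  have hderiv : ∀ x ∈ Set.Ici a, HasDerivAt (fun x => gaussianPDFReal μ v x * f x)
      (gaussianPDFReal μ v x * (f' x - (x - μ) * f x / v)) x := fun x hx => by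
    convert! (hasDerivAt_gaussianPDFReal μ v x).mul (hf x hx) using 1
    ring
  have hint : IntegrableOn (fun x => f' x - (x - μ) * f x / v) (Set.Ioi a) (gaussianReal μ v) :=
    hf'_int.sub (hxf_int.div_const v)
  have hint_vol := (integrableOn_gaussianReal_iff hv measurableSet_Ioi).mp hint
  have hvanish : Tendsto (fun x => gaussianPDFReal μ v x * f x) atTop (𝓝 0) :=
    tendsto_zero_of_hasDerivAt_of_integrableOn_Ioi
      (fun x hx => hderiv x (Set.Ioi_subset_Ici_self hx)) hint_vol
      ((integrableOn_gaussianReal_iff hv measurableSet_Ioi).mp hf_int)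
  have hFTC := integral_Ioi_of_hasDerivAt_of_tendsto' hderiv hint_vol hvanish
  rw [← setIntegral_gaussianReal hv _ measurableSet_Ioi,
    integral_sub hf'_int (hxf_int.div_const v), integral_div] at hFTC
  have hv' : (v : ℝ) ≠ 0 := NNReal.coe_ne_zero.mpr hv
  field_simp at hFTC
  linarith

lemma integrable_id_gaussianReal (μ : ℝ) (v : NNReal) :
    Integrable (fun x => x) (gaussianReal μ v) :=
  (memLp_id_gaussianReal 1).integrable le_rfl

lemma integrable_sub_mul_sub_gaussianReal (μ : ℝ) (v : NNReal) (a b : ℝ) :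
    Integrable (fun x => (x - a) * (x - b)) (gaussianReal μ v) :=
  have hsub_memLp (c : ℝ) : MemLp (fun x => x - c) 2 (gaussianReal μ v) :=
    (memLp_id_gaussianReal 2).sub (memLp_const c)
  (hsub_memLp a).integrable_mul (hsub_memLp b)

lemma integral_max_sub_zero_eq_setIntegral_Ioi (ν : Measure ℝ) (u : ℝ) :
    ∫ x, max (x - u) 0 ∂ν = ∫ x in Set.Ioi u, (x - u) ∂ν := by
  rw [← setIntegral_eq_integral_of_forall_compl_eq_zero (s := Set.Ioi u) fun x hx =>
    max_eq_right (sub_nonpos.mpr (not_lt.mp hx))]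
  exact setIntegral_congr_fun measurableSet_Ioi fun x hx =>
    max_eq_left (sub_nonneg.mpr (le_of_lt hx))

lemma sub_mean_mul_integral_max_sub_gaussianReal_le (hv : v ≠ 0) (u : ℝ) :
    (u - μ) * ∫ x, max (x - u) 0 ∂gaussianReal μ v ≤ v * (gaussianReal μ v).real (Set.Ioi u) := by
  have hsub_int : Integrable (fun x => x - u) (gaussianReal μ v) :=
    (integrable_id_gaussianReal μ v).sub (integrable_const u)
  have hmul_int := (integrable_sub_mul_sub_gaussianReal μ v μ u).integrableOn (s := Set.Ioi u)
  calc (u - μ) * ∫ x, max (x - u) 0 ∂gaussianReal μ v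
      = ∫ x in Set.Ioi u, (u - μ) * (x - u) ∂gaussianReal μ v := by
        rw [integral_max_sub_zero_eq_setIntegral_Ioi, integral_const_mul]
    _ ≤ ∫ x in Set.Ioi u, (x - μ) * (x - u) ∂gaussianReal μ v := by
        refine setIntegral_mono_on (hsub_int.const_mul _).integrableOn hmul_int measurableSet_Ioi
          fun x (hx : u < x) => ?_
        gcongr
    _ = v * (gaussianReal μ v).real (Set.Ioi u) := by
        rw [integral_Ioi_sub_mean_mul_gaussianReal hv (f' := fun _ => 1)
          (fun x _ => (hasDerivAt_id' x).sub_const u) hsub_int.integrableOn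
          (integrable_const _) hmul_int]
        simp

end Gaussian

section Maximum

lemma max_iSup_sub_le_sum {ι : Type*} [Fintype ι] [Nonempty ι] (x : ι → ℝ) (u : ℝ) :
    max ((⨆ i, x i) - u) 0 ≤ ∑ i, max (x i - u) 0 := by
  have hnonneg : ∀ i ∈ Finset.univ, 0 ≤ max (x i - u) 0 := fun i _ => le_max_right _ _
  obtain ⟨i, hi⟩ := exists_eq_ciSup_of_finite (f := x)
  rw [← hi]
  exact Finset.single_le_sum hnonneg (Finset.mem_univ i)

variable {Ω : Type*} [MeasurableSpace Ω] {P : Measure Ω}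

lemma integrable_iSup_of_finite {ι : Type*} [Finite ι] [Nonempty ι] {X : ι → Ω → ℝ}
    (hX : ∀ i, Integrable (X i) P) :
    Integrable (fun ω => ⨆ i, X i ω) P := by
  have := Fintype.ofFinite ι
  have h : Integrable (Finset.univ.sup' Finset.univ_nonempty X) P :=
    Finset.sup'_induction (p := (Integrable · P)) _ _ (fun _ hf _ hg => hf.sup hg) fun i _ => hX i
  convert! h using 2 with ω
  rw [Finset.sup'_apply, Finset.sup'_univ_eq_ciSup]

lemma integrable_of_hasLaw_gaussianReal {Y : Ω → ℝ} {μ : ℝ} {v : NNReal}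
    (hY : HasLaw Y (gaussianReal μ v) P) : Integrable Y P :=
  Integrable.comp_aemeasurable (g := fun x => x)
    (hY.map_eq ▸ integrable_id_gaussianReal μ v) hY.aemeasurable

variable {ι : Type*} [Fintype ι] [Nonempty ι] {X : ι → Ω → ℝ}

lemma integral_max_iSup_sub_le_sum [IsFiniteMeasure P] (hX : ∀ i, Integrable (X i) P) (u : ℝ) :
    ∫ ω, max ((⨆ i, X i ω) - u) 0 ∂P ≤ ∑ i, ∫ ω, max (X i ω - u) 0 ∂P := by
  have hexcess_int : ∀ i ∈ Finset.univ, Integrable (fun ω => max (X i ω - u) 0) P := fun i _ =>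
    ((hX i).sub (integrable_const u)).pos_part
  rw [← integral_finsetSum _ hexcess_int]
  exact integral_mono ((integrable_iSup_of_finite hX).sub (integrable_const u)).pos_part
    (integrable_finsetSum _ hexcess_int) fun ω => max_iSup_sub_le_sum (fun i => X i ω) u

lemma sub_mean_mul_integral_max_iSup_sub_le {μ : ℝ} {v : NNReal} (hv : v ≠ 0)
    (hX : ∀ i, HasLaw (X i) (gaussianReal μ v) P) {u : ℝ} (hu : μ ≤ u) :
    (u - μ) * ∫ ω, max ((⨆ i, X i ω) - u) 0 ∂P
      ≤ Fintype.card ι * (v * (gaussianReal μ v).real (Set.Ioi u)) := by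
  have : IsProbabilityMeasure P := (hX (Classical.arbitrary ι)).isProbabilityMeasure
  calc (u - μ) * ∫ ω, max ((⨆ i, X i ω) - u) 0 ∂P
      ≤ (u - μ) * ∑ i, ∫ ω, max (X i ω - u) 0 ∂P :=
        mul_le_mul_of_nonneg_left
          (integral_max_iSup_sub_le_sum (fun i => integrable_of_hasLaw_gaussianReal (hX i)) u)
          (sub_nonneg.mpr hu)
    _ = ∑ _i : ι, (u - μ) * ∫ x, max (x - u) 0 ∂gaussianReal μ v := by
        rw [Finset.mul_sum]
        congr! with i
        exact (hX i).integral_comp (f := fun x => max (x - u) 0) (by fun_prop)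
    _ ≤ ∑ _i : ι, v * (gaussianReal μ v).real (Set.Ioi u) :=
        Finset.sum_le_sum fun _ _ => sub_mean_mul_integral_max_sub_gaussianReal_le hv u
    _ = Fintype.card ι * (v * (gaussianReal μ v).real (Set.Ioi u)) := by simp

end Maximum

section Quantile

-- For `y ≤ 0` the infimum is over `Set.univ`, hence `0` by convention, and the bound still holds.
lemma le_cdf_sInf (μ : Measure ℝ) {y : ℝ} (hy : y < 1) :
    y ≤ cdf μ (sInf {x | y ≤ cdf μ x}) := by
  have hne : {x | y ≤ cdf μ x}.Nonempty :=
    ((tendsto_cdf_atTop μ).eventually_const_le hy).exists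
  refine ge_of_tendsto (((cdf μ).right_continuous _).mono Set.Ioi_subset_Ici_self) ?_
  filter_upwards [self_mem_nhdsWithin] with x hx
  obtain ⟨z, hz, hzx⟩ := exists_lt_of_csInf_lt hne hx
  exact hz.trans (monotone_cdf μ hzx.le)

lemma stdGaussianCDF_eq_cdf (x : ℝ) : stdGaussianCDF x = cdf (gaussianReal 0 1) x := by
  rw [cdf_eq_real, measureReal_gaussianReal one_ne_zero measurableSet_Iic, stdGaussianCDF]
  simp [gaussianPDFReal, div_eq_inv_mul]

lemma measureReal_Ioi_eq_one_sub_stdGaussianCDF (x : ℝ) :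
    (gaussianReal 0 1).real (Set.Ioi x) = 1 - stdGaussianCDF x := by
  rw [stdGaussianCDF_eq_cdf, cdf_eq_real, ← Set.compl_Iic,
    probReal_compl_eq_one_sub measurableSet_Iic]

lemma le_stdGaussianCDF_stdGaussianQuantile {y : ℝ} (hy : y < 1) :
    y ≤ stdGaussianCDF (stdGaussianQuantile y) := by
  simpa only [stdGaussianQuantile, stdGaussianCDF_eq_cdf] using le_cdf_sInf (gaussianReal 0 1) hy

lemma measureReal_Ioi_stdGaussianQuantile_le {y : ℝ} (hy : y < 1) :
    (gaussianReal 0 1).real (Set.Ioi (stdGaussianQuantile y)) ≤ 1 - y := by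
  rw [measureReal_Ioi_eq_one_sub_stdGaussianCDF]
  linarith [le_stdGaussianCDF_stdGaussianQuantile hy]

lemma lt_stdGaussianQuantile {x y : ℝ} (hy : y < 1)
    (hx : 1 - y < (gaussianReal 0 1).real (Set.Ioi x)) : x < stdGaussianQuantile y := by
  contrapose! hx
  exact (measureReal_mono (Set.Ioi_subset_Ioi hx)).trans (measureReal_Ioi_stdGaussianQuantile_le hy)

lemma exp_neg_sq_lt_gaussianPDFReal {t : ℝ} (ht : 2 ≤ t) :
    Real.exp (-t ^ 2) < gaussianPDFReal 0 1 t := by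
  have hsqrt : Real.sqrt (2 * Real.pi) < 3 := by
    rw [Real.sqrt_lt' (by norm_num)]
    linarith [Real.pi_lt_four]
  have hexp : Real.sqrt (2 * Real.pi) < Real.exp (t ^ 2 / 2) := by
    nlinarith [Real.add_one_le_exp (t ^ 2 / 2)]
  calc Real.exp (-t ^ 2) = (Real.exp (t ^ 2 / 2))⁻¹ * Real.exp (-t ^ 2 / 2) := by
        rw [← Real.exp_neg, ← Real.exp_add]
        ring_nf
    _ < (Real.sqrt (2 * Real.pi))⁻¹ * Real.exp (-t ^ 2 / 2) := by gcongr
    _ = gaussianPDFReal 0 1 t := by simp [gaussianPDFReal]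

lemma sqrt_log_sub_one_lt_stdGaussianQuantile {x : ℝ} (hx : 0 < x) (hlog : 4 ≤ Real.log x) :
    Real.sqrt (Real.log x) - 1 < stdGaussianQuantile (1 - 1 / x) := by
  have hsqrt : 2 ≤ Real.sqrt (Real.log x) := Real.le_sqrt_of_sq_le (by linarith)
  refine lt_stdGaussianQuantile (sub_lt_self _ (one_div_pos.mpr hx)) ?_
  calc 1 - (1 - 1 / x) = Real.exp (-Real.sqrt (Real.log x) ^ 2) := by
        rw [Real.sq_sqrt (by linarith), Real.exp_neg, Real.exp_log hx, sub_sub_cancel, one_div]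
    _ < gaussianPDFReal 0 1 (Real.sqrt (Real.log x)) := exp_neg_sq_lt_gaussianPDFReal hsqrt
    _ ≤ (gaussianReal 0 1).real (Set.Ioi (Real.sqrt (Real.log x) - 1)) := by
        simpa using mul_gaussianPDFReal_add_le_measureReal_Ioi (μ := 0) one_ne_zero
          (x := Real.sqrt (Real.log x) - 1) (by linarith) zero_le_one

lemma sqrt_log_div_two_lt_stdGaussianQuantile {x : ℝ} (hx : 0 < x) (hlog : 4 ≤ Real.log x) :
    Real.sqrt (Real.log x) / 2 < stdGaussianQuantile (1 - 1 / x) := by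
  have hsqrt : 2 ≤ Real.sqrt (Real.log x) := Real.le_sqrt_of_sq_le (by linarith)
  linarith [sqrt_log_sub_one_lt_stdGaussianQuantile hx hlog]

end Quantile

section RelativeExcess

variable {Ω : Type*} [MeasurableSpace Ω] {P : Measure Ω}

lemma measure_add_lt_le_ofReal_integral_max_sub {Z : Ω → ℝ} {c δ : ℝ}
    (hZ : Integrable (fun ω => max (Z ω - c) 0) P) (hδ : 0 < δ) :
    P {ω | c + δ < Z ω} ≤ ENNReal.ofReal (δ⁻¹ * ∫ ω, max (Z ω - c) 0 ∂P) := by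
  have hmarkov := mul_meas_ge_le_lintegral₀ hZ.aemeasurable.ennreal_ofReal (ENNReal.ofReal δ)
  rw [← ofReal_integral_eq_lintegral_ofReal hZ (ae_of_all _ fun ω => le_max_right _ _)] at hmarkov
  rw [ENNReal.ofReal_mul (inv_nonneg.mpr hδ.le), ENNReal.ofReal_inv_of_pos hδ, mul_comm,
    ← div_eq_mul_inv, ENNReal.le_div_iff_mul_le (by simp [hδ]) (by simp), mul_comm]
  refine le_trans ?_ hmarkov
  gcongr with ω
  exact fun hω => ENNReal.ofReal_le_ofReal (le_max_of_le_left (by linarith))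

variable {p : ℕ} {X : Fin p → Ω → ℝ}

lemma integrable_max_iSup_div_sub_one [NeZero p] (hX : ∀ i, HasLaw (X i) (gaussianReal 0 1) P)
    (u : ℝ) : Integrable (fun ω => max ((⨆ i, X i ω) / u - 1) 0) P := by
  have : IsProbabilityMeasure P := (hX 0).isProbabilityMeasure
  have hmax := integrable_iSup_of_finite fun i => integrable_of_hasLaw_gaussianReal (hX i)
  exact ((hmax.div_const u).sub (integrable_const 1)).pos_part

lemma integral_max_iSup_div_stdGaussianQuantile_le [NeZero p]
    (hX : ∀ i, HasLaw (X i) (gaussianReal 0 1) P) (hlog : 4 ≤ Real.log p) :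
    ∫ ω, max ((⨆ i, X i ω) / stdGaussianQuantile (1 - 1 / p) - 1) 0 ∂P ≤ 4 * (1 / Real.log p) := by
  have hp : (0 : ℝ) < p := Nat.cast_pos.mpr (NeZero.pos p)
  have hlog_pos : 0 < Real.log p := by linarith
  have hlower := sqrt_log_div_two_lt_stdGaussianQuantile hp hlog
  have htail := measureReal_Ioi_stdGaussianQuantile_le (sub_lt_self 1 (one_div_pos.mpr hp))
  set u := stdGaussianQuantile (1 - 1 / p)
  have hu : 0 < u := lt_of_le_of_lt (by positivity) hlower
  have hexcess := sub_mean_mul_integral_max_iSup_sub_le one_ne_zero hX hu.le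
  calc ∫ ω, max ((⨆ i, X i ω) / u - 1) 0 ∂P
      = (u * ∫ ω, max ((⨆ i, X i ω) - u) 0 ∂P) / u ^ 2 := by
        have hscale (ω : Ω) : max ((⨆ i, X i ω) / u - 1) 0 = max ((⨆ i, X i ω) - u) 0 / u := by
          rw [← max_div_div_right hu.le, sub_div, div_self hu.ne', zero_div]
        simp only [hscale, integral_div]
        field_simp
    _ ≤ (p * (gaussianReal 0 1).real (Set.Ioi u)) / u ^ 2 := by
        gcongr ?_ / u ^ 2
        simpa using hexcess
    _ ≤ (p * (1 / p)) / (Real.sqrt (Real.log p) / 2) ^ 2 := by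
        gcongr
        linarith
    _ = 4 * (1 / Real.log p) := by
        rw [div_pow, Real.sq_sqrt hlog_pos.le]
        field_simp
        norm_num

end RelativeExcess

section TriangularArray

variable {Ω : ℕ → Type*} [∀ p, MeasurableSpace (Ω p)] {P : ∀ p, Measure (Ω p)} {δ : ℕ → ℝ}

lemma tendsto_measure_add_lt_of_tendsto_integral_max_sub {Z : ∀ p, Ω p → ℝ} {c : ℝ}
    (hZ : ∀ᶠ p in atTop, Integrable (fun ω => max (Z p ω - c) 0) (P p)) (hδ : ∀ p, 0 < δ p)
    (hmean : Tendsto (fun p => (δ p)⁻¹ * ∫ ω, max (Z p ω - c) 0 ∂P p) atTop (𝓝 0)) :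
    Tendsto (fun p => P p {ω | c + δ p < Z p ω}) atTop (𝓝 0) := by
  refine tendsto_of_tendsto_of_tendsto_of_le_of_le' tendsto_const_nhds
    (ENNReal.ofReal_zero ▸ ENNReal.tendsto_ofReal hmean) (.of_forall fun _ => zero_le) ?_
  filter_upwards [hZ] with p hp
  exact measure_add_lt_le_ofReal_integral_max_sub hp (hδ p)

variable {ε : (p : ℕ) → Fin p → Ω p → ℝ}

lemma tendsto_inv_mul_integral_max_iSup_div_stdGaussianQuantile
    (hε : ∀ p i, HasLaw (ε p i) (gaussianReal 0 1) (P p)) (hδ : ∀ p, 0 < δ p)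
    (hrate : Tendsto (fun p : ℕ => (1 / Real.log p) / δ p) atTop (𝓝 0)) :
    Tendsto (fun p : ℕ => (δ p)⁻¹ *
      ∫ ω, max ((⨆ i, ε p i ω) / stdGaussianQuantile (1 - 1 / p) - 1) 0 ∂P p) atTop (𝓝 0) := by
  have hlog : ∀ᶠ p : ℕ in atTop, 4 ≤ Real.log p :=
    (Real.tendsto_log_atTop.comp tendsto_natCast_atTop_atTop).eventually_ge_atTop 4
  have hbound : Tendsto (fun p : ℕ => 4 * ((1 / Real.log p) / δ p)) atTop (𝓝 0) := by
    simpa only [mul_zero] using hrate.const_mul 4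
  refine squeeze_zero' (.of_forall fun p => mul_nonneg (inv_nonneg.mpr (hδ p).le)
    (integral_nonneg fun ω => le_max_right _ _)) ?_ hbound
  filter_upwards [hlog, eventually_ne_atTop 0] with p hp hp0
  have : NeZero p := ⟨hp0⟩
  rw [← mul_div_assoc, inv_mul_eq_div]
  exact div_le_div_of_nonneg_right (integral_max_iSup_div_stdGaussianQuantile_le (hε p) hp)
    (hδ p).le

theorem upper_tail_rate_arbitrary_dependence_general
    (hε : ∀ p i, HasLaw (ε p i) (gaussianReal 0 1) (P p)) (hδ : ∀ p, 0 < δ p)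
    (hrate : Tendsto (fun p : ℕ => (1 / Real.log p) / δ p) atTop (𝓝 0)) :
    Tendsto (fun p : ℕ => (δ p)⁻¹ *
        ∫ ω, max ((⨆ i, ε p i ω) / stdGaussianQuantile (1 - 1 / p) - 1) 0 ∂P p) atTop (𝓝 0) ∧
      Tendsto (fun p : ℕ =>
        P p {ω | 1 + δ p < (⨆ i, ε p i ω) / stdGaussianQuantile (1 - 1 / p)}) atTop (𝓝 0) := by
  have hmean := tendsto_inv_mul_integral_max_iSup_div_stdGaussianQuantile hε hδ hrate
  refine ⟨hmean, tendsto_measure_add_lt_of_tendsto_integral_max_sub ?_ hδ hmean⟩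
  filter_upwards [eventually_ne_atTop 0] with p hp0
  have : NeZero p := ⟨hp0⟩
  exact integrable_max_iSup_div_sub_one (hε p) _

end TriangularArray

/-- For an arbitrary Gaussian triangular array with standard Normal marginals, if
`δ_p → 0` and `(1/log p)/δ_p → 0`, then `δ_p⁻¹ E[(ξ_p - 1)_+] → 0` and consequently
`P(ξ_p > 1 + δ_p) → 0`, where `ξ_p = u_p⁻¹ max_{i∈[p]} ε_p(i)` and `u_p = Φ^{←}(1 - 1/p)`. -/
theorem upper_tail_rate_arbitrary_dependence
    {Ω : Type*} [MeasureSpace Ω] [IsProbabilityMeasure (ℙ : Measure Ω)]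
    (ε : (p : ℕ) → Fin p → Ω → ℝ)
    (hmeas : ∀ p i, Measurable (ε p i))
    (hGauss : ∀ p, IsJointGaussian (ε p))
    (hmarg : ∀ p i, Measure.map (ε p i) ℙ = gaussianReal 0 1)
    (δ : ℕ → ℝ) (hδ_pos : ∀ p, 0 < δ p) (hδ0 : Tendsto δ atTop (𝓝 0))
    (hrate : Tendsto (fun p : ℕ => (1 / Real.log p) / δ p) atTop (𝓝 0)) :
    Tendsto (fun p : ℕ =>
        (δ p)⁻¹ *
          ∫ ω, max ((⨆ i : Fin p, ε p i ω) / stdGaussianQuantile (1 - 1 / p) - 1) 0 ∂ℙ)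
      atTop (𝓝 0) ∧
    Tendsto (fun p : ℕ =>
        ℙ {ω | 1 + δ p < (⨆ i : Fin p, ε p i ω) / stdGaussianQuantile (1 - 1 / p)})
      atTop (𝓝 0) := by
  exact upper_tail_rate_arbitrary_dependence_general
    (fun p i => ⟨(hmeas p i).aemeasurable, hmarg p i⟩) hδ_pos hrate
end
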